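/- Fix a real number γ with 1 < γ ≤ 5/3. Then there exists s₀ such that for all integers s ≥ s₀, k ≥ 2 and n with n ≥ γ·s·k − (γ−1)·s, one has m(n,k,s) ≤ C(n,k) − ((γ−1)/2)·((5k−2)/(γk−(γ−1)))·C(n−s,k), where C(a,b) denotes the binomial coefficient. -/

import Mathlib

open Finset

/-- The matching number of a family of finite sets: the maximum size of a
subfamily consisting of pairwise disjoint sets. -/
noncomputable def matchingNumber (F : Finset (Finset ℕ)) : ℕ :=
  sSup {t : ℕ | ∃ M : Finset (Finset ℕ), M ⊆ F ∧
    (M : Set (Finset ℕ)).Pairwise (fun A B => Disjoint A B) ∧ M.card = t}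

/-- `maxSizeEMC n k s` is `m(n,k,s)`: the maximum size of a family of
`k`-element subsets of an `n`-element set with no matching of size `s+1`. -/
noncomputable def maxSizeEMC (n k s : ℕ) : ℕ :=
  sSup {t : ℕ | ∃ F : Finset (Finset ℕ), F ⊆ (Finset.range n).powersetCard k ∧
    matchingNumber F ≤ s ∧ F.card = t}

/-! By shifting we may assume that an extremal family `F` is shifted. Let `U = {0, …, s}`, let `V`
consist of the remaining points, and compare `F` with the family of all `k`-sets. Members meeting
`U` in two or more points are counted trivially, so the theorem amounts to an upper bound on
`Φ + A`, where `Φ` is the number of members missing `U` and `A` is the total size of the links in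
`V` of the points of `U`, both relative to `(#V).choose (k - 1)`.

To bound `A`, place about `γ * s` disjoint `(k - 1)`-subsets of `V` at random. By Hall's theorem,
every placement has an `i ≤ s` such that at most `s - i` of them lie in the link of `i`, and, by
shiftedness, in each later link. Since two shifted families are negatively correlated on disjoint
sets, the number of them in the smallest link is concentrated around its mean, which leaves room for
an extra term in `A + w ≤ s`. As for `Φ`, the shadow of the members missing `U` lies in the smallest
link and is not much smaller; a second bound comes from building a matching out of random disjoint
sets lying in `F` or becoming members after adding one or two points of `U`. -/

open Equiv

open scoped FinsetFamily

namespace ErdosMatching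

section Matching

/-- `𝒜` contains a matching of size `t`, given as a family of pairwise disjoint members indexed by
`Fin t`. Only the empty set could occur twice in such a family. -/
def HasMatching {α : Type*} (𝒜 : Finset (Finset α)) (t : ℕ) : Prop :=
  ∃ f : Fin t → Finset α, (∀ p, f p ∈ 𝒜) ∧ Pairwise (Function.onFun Disjoint f)

theorem not_hasMatching_of_matchingNumber_le {𝒜 : Finset (Finset ℕ)} {s : ℕ} (h𝒜 : ∅ ∉ 𝒜)
    (hs : matchingNumber 𝒜 ≤ s) : ¬ HasMatching 𝒜 (s + 1) := by
  rintro ⟨f, hf, hd⟩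
  have hinj : Function.Injective f := by
    intro p q hpq
    by_contra hne
    have hp : f p = ∅ := by simpa [Function.onFun, ← hpq] using hd hne
    exact h𝒜 (hp ▸ hf p)
  have hmem : s + 1 ≤ matchingNumber 𝒜 := by
    unfold matchingNumber
    refine le_csSup ⟨#𝒜, ?_⟩ ⟨univ.image f, image_subset_iff.2 fun p _ ↦ hf p, ?_, ?_⟩
    · rintro _ ⟨M, hM, -, rfl⟩
      exact card_le_card hM
    · rw [coe_image, coe_univ, Set.image_univ]
      exact hd.range_pairwise
    · rw [card_image_of_injective _ hinj, card_univ, Fintype.card_fin]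
  omega

theorem exists_card_eq_maxSizeEMC (n k s : ℕ) :
    ∃ 𝒜 ⊆ (range n).powersetCard k, matchingNumber 𝒜 ≤ s ∧ #𝒜 = maxSizeEMC n k s := by
  refine Nat.sSup_mem (s := {t | ∃ 𝒜 ⊆ (range n).powersetCard k, matchingNumber 𝒜 ≤ s ∧ #𝒜 = t})
    ⟨0, ∅, empty_subset _, ?_, card_empty⟩ ⟨#((range n).powersetCard k), ?_⟩
  · refine csSup_le' ?_
    rintro _ ⟨M, hM, -, rfl⟩
    simp [subset_empty.1 hM]
  · rintro _ ⟨𝒜, h𝒜, -, rfl⟩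
    exact card_le_card h𝒜

end Matching

section Shifting

variable {α : Type*} [DecidableEq α] {𝒜 : Finset (Finset α)} {A V : Finset α} {i j : α} {k t : ℕ}

theorem map_swap_eq_insert_erase (hj : j ∈ A) (hi : i ∉ A) :
    A.map (swap i j).toEmbedding = insert i (A.erase j) := by
  ext x
  rw [mem_map_equiv, symm_swap, swap_apply_def]
  grind

theorem map_swap_of_notMem (hj : j ∉ A) (hi : i ∉ A) : A.map (swap i j).toEmbedding = A := by
  ext x
  rw [mem_map_equiv, symm_swap, swap_apply_def]
  grind

theorem union_sdiff_singleton (hj : j ∈ A) (hi : i ∉ A) :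
    (A ∪ {i}) \ {j} = insert i (A.erase j) := by
  grind

theorem hasMatching_of_compression (h : HasMatching (UV.compression {i} {j} 𝒜) t) :
    HasMatching 𝒜 t := by
  obtain ⟨f, hf, hd⟩ := h
  by_cases hall : ∀ p, f p ∈ 𝒜
  · exact ⟨f, hall, hd⟩
  push Not at hall
  obtain ⟨p, hp⟩ := hall
  have hip : i ∈ f p := by simpa using UV.le_of_mem_compression_of_notMem (hf p) hp
  have hjp : j ∉ f p := by simpa using UV.disjoint_of_mem_compression_of_notMem (hf p) hp
  -- A new member `f p` is the only one containing `i`, so swapping `i` and `j` in every member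
  -- carries the matching into `𝒜`.
  refine ⟨fun q ↦ (f q).map (swap i j).toEmbedding, fun q ↦ ?_,
    fun q r hqr ↦ (disjoint_map _).2 (hd hqr)⟩
  change (f q).map (swap i j).toEmbedding ∈ 𝒜
  obtain rfl | hqp := eq_or_ne q p
  · rw [swap_comm, map_swap_eq_insert_erase hip hjp, ← union_sdiff_singleton hip hjp]
    exact UV.sup_sdiff_mem_of_mem_compression_of_notMem (hf q) hp
  have hiq : i ∉ f q := fun hiq ↦ disjoint_left.1 (hd hqp) hiq hip
  by_cases hjq : j ∈ f q
  · rw [map_swap_eq_insert_erase hjq hiq, ← union_sdiff_singleton hjq hiq]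
    exact UV.sup_sdiff_mem_of_mem_compression (hf q) (by simpa using hjq) (by simpa using hiq)
  · rw [map_swap_of_notMem hjq hiq]
    by_contra hq
    exact hiq (by simpa using UV.le_of_mem_compression_of_notMem (hf q) hq)

theorem compress_singleton (hj : j ∈ A) (hi : i ∉ A) :
    UV.compress {i} {j} A = insert i (A.erase j) := by
  rw [UV.compress_of_disjoint_of_le (by simpa using hi) (by simpa using hj), sup_eq_union,
    union_sdiff_singleton hj hi]

theorem compress_singleton_of_not (h : ¬ (j ∈ A ∧ i ∉ A)) : UV.compress {i} {j} A = A := by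
  rw [UV.compress, if_neg]
  simpa [and_comm] using h

theorem compression_subset_powersetCard (hi : i ∈ V) (h𝒜 : 𝒜 ⊆ V.powersetCard k) :
    UV.compression {i} {j} 𝒜 ⊆ V.powersetCard k := by
  intro A hA
  rw [UV.mem_compression] at hA
  obtain ⟨hA, -⟩ | ⟨-, B, hB, rfl⟩ := hA
  · exact h𝒜 hA
  obtain ⟨hBV, hBk⟩ := mem_powersetCard.1 (h𝒜 hB)
  refine mem_powersetCard.2 ⟨?_, by rw [UV.card_compress (by simp), hBk]⟩
  unfold UV.compress
  split_ifs
  · exact sdiff_subset.trans (union_subset hBV (singleton_subset_iff.2 hi))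
  · exact hBV

theorem insert_erase_mem_powersetCard (hA : A ∈ V.powersetCard k) (hi : i ∈ V) (hj : j ∈ A)
    (hiA : i ∉ A) : insert i (A.erase j) ∈ V.powersetCard k := by
  obtain ⟨hAV, hAk⟩ := mem_powersetCard.1 hA
  refine mem_powersetCard.2 ⟨insert_subset hi ((erase_subset _ _).trans hAV), ?_⟩
  rw [card_insert_of_notMem (fun h ↦ hiA (mem_of_mem_erase h)), card_erase_add_one hj, hAk]

/-- `𝒜` is shifted (left-compressed) within `V`: replacing an element of a member by a smaller
element of `V` gives a member again. -/
def ShiftedOn [LT α] (V : Set α) (𝒜 : Finset (Finset α)) : Prop :=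
  ∀ A ∈ 𝒜, ∀ i ∈ V, ∀ j ∈ A, i < j → i ∉ A → insert i (A.erase j) ∈ 𝒜

theorem ShiftedOn.mono [LT α] {V W : Set α} (h : ShiftedOn W 𝒜) (hVW : V ⊆ W) : ShiftedOn V 𝒜 :=
  fun A hA i hi ↦ h A hA i (hVW hi)

theorem sum_compression_lt {𝒜 : Finset (Finset ℕ)} {A : Finset ℕ} {i j : ℕ} (hij : i < j)
    (hA : A ∈ 𝒜) (hj : j ∈ A) (hi : i ∉ A) (hn : insert i (A.erase j) ∉ 𝒜) :
    ∑ B ∈ UV.compression {i} {j} 𝒜, ∑ x ∈ B, x < ∑ B ∈ 𝒜, ∑ x ∈ B, x := by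
  have hlt : ∀ B : Finset ℕ, j ∈ B → i ∉ B → ∑ x ∈ insert i (B.erase j), x < ∑ x ∈ B, x := by
    intro B hj hi
    rw [sum_insert (fun h ↦ hi (mem_of_mem_erase h)), ← add_sum_erase _ _ hj]
    exact Nat.add_lt_add_right hij _
  have hle : ∀ B : Finset ℕ, ∑ x ∈ UV.compress {i} {j} B, x ≤ ∑ x ∈ B, x := by
    intro B
    by_cases hB : j ∈ B ∧ i ∉ B
    · rw [compress_singleton hB.1 hB.2]
      exact (hlt B hB.1 hB.2).le
    · rw [compress_singleton_of_not hB]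
  rw [UV.compression, sum_union UV.compress_disjoint, filter_image, sum_image UV.compress_injOn,
    ← sum_filter_add_sum_filter_not 𝒜 (fun B ↦ UV.compress {i} {j} B ∈ 𝒜)]
  refine Nat.add_lt_add_left (sum_lt_sum (fun B _ ↦ hle B) ⟨A, mem_filter.2 ⟨hA, ?_⟩, ?_⟩) _
  · rwa [compress_singleton hj hi]
  · rw [compress_singleton hj hi]
    exact hlt A hj hi

theorem exists_shiftedOn {𝒜 : Finset (Finset ℕ)} {n k t : ℕ} (h𝒜 : 𝒜 ⊆ (range n).powersetCard k)
    (ht : ¬ HasMatching 𝒜 t) :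
    ∃ ℬ ⊆ (range n).powersetCard k, ¬ HasMatching ℬ t ∧ #ℬ = #𝒜 ∧ ShiftedOn .univ ℬ := by
  induction hw : ∑ B ∈ 𝒜, ∑ x ∈ B, x using Nat.strong_induction_on generalizing 𝒜 with
  | _ w ih =>
    by_cases hs : ShiftedOn .univ 𝒜
    · exact ⟨𝒜, h𝒜, ht, rfl, hs⟩
    unfold ShiftedOn at hs
    push Not at hs
    obtain ⟨A, hA, i, -, j, hj, hij, hi, hn⟩ := hs
    have hin : i ∈ range n :=
      mem_range.2 (hij.trans (mem_range.1 ((mem_powersetCard.1 (h𝒜 hA)).1 hj)))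
    obtain ⟨ℬ, h1, h2, h3, h4⟩ := ih _ (hw ▸ sum_compression_lt hij hA hj hi hn)
      (compression_subset_powersetCard hin h𝒜) (mt hasMatching_of_compression ht) rfl
    exact ⟨ℬ, h1, h2, h3.trans (UV.card_compression _ _ _), h4⟩

end Shifting

section Dominance

variable {α : Type*} [LinearOrder α] {𝒜 : Finset (Finset α)} {A B : Finset α} {i j : α}

theorem card_filter_lt_insert_erase_le (hj : j ∈ A) (hi : i ∉ A) (hij : i < j)
    (hA : ∀ x ∈ A, x < j → x ∈ B) (hiB : i ∈ B) (hAB : ∀ m, #{x ∈ A | x < m} ≤ #{x ∈ B | x < m})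
    (m : α) : #{x ∈ insert i (A.erase j) | x < m} ≤ #{x ∈ B | x < m} := by
  obtain hm | hm := le_or_gt m j
  · refine card_le_card fun x hx ↦ ?_
    simp only [mem_filter, mem_insert, mem_erase] at hx ⊢
    obtain ⟨rfl | hx, hxm⟩ := hx
    · exact ⟨hiB, hxm⟩
    · exact ⟨hA x hx.2 (hxm.trans_le hm), hxm⟩
  · have himp : {x ∈ insert i (A.erase j) | x < m} = insert i ({x ∈ A | x < m}.erase j) := by
      grind
    rw [himp, card_insert_of_notMem (by grind), card_erase_add_one (by grind)]
    exact hAB m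

theorem ShiftedOn.mem_of_card_filter_lt_le (h : ShiftedOn .univ 𝒜) (hA : A ∈ 𝒜) (hc : #A = #B)
    (hAB : ∀ m, #{x ∈ A | x < m} ≤ #{x ∈ B | x < m}) : B ∈ 𝒜 := by
  induction hd : #(A \ B) generalizing A with
  | zero =>
    rw [card_eq_zero, sdiff_eq_empty_iff_subset] at hd
    rwa [← eq_of_subset_of_card_le hd hc.ge]
  | succ d ih =>
    have hneA : (A \ B).Nonempty := card_pos.1 (by omega)
    have hneB : (B \ A).Nonempty := card_pos.1 (by rw [← card_sdiff_comm hc]; omega)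
    obtain ⟨j, hj, hjmin⟩ := exists_min_image _ id hneA
    obtain ⟨i, hi, himin⟩ := exists_min_image _ id hneB
    have hjB : ∀ x ∈ A, x < j → x ∈ B := fun x hx hxj ↦ by
      by_contra hxB
      exact (hjmin x (mem_sdiff.2 ⟨hx, hxB⟩)).not_gt hxj
    have hiA : ∀ x ∈ B, x < i → x ∈ A := fun x hx hxi ↦ by
      by_contra hxA
      exact (himin x (mem_sdiff.2 ⟨hx, hxA⟩)).not_gt hxi
    rw [mem_sdiff] at hj hi
    have hij : i < j := by
      by_contra! hji
      have hlt : j < i := hji.lt_of_ne fun h ↦ hj.2 (h ▸ hi.1)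
      refine (hAB i).not_gt (card_lt_card ((ssubset_iff_of_subset ?_).2 ⟨j, ?_⟩))
      · exact fun x hx ↦ mem_filter.2 ⟨hiA x (mem_filter.1 hx).1 (mem_filter.1 hx).2,
          (mem_filter.1 hx).2⟩
      · exact ⟨mem_filter.2 ⟨hj.1, hlt⟩, fun h ↦ hj.2 (mem_filter.1 h).1⟩
    refine ih (h A hA i trivial j hj.1 hij hi.2) ?_
      (card_filter_lt_insert_erase_le hj.1 hi.2 hij hjB hi.1 hAB) ?_
    · rw [card_insert_of_notMem (fun h ↦ hi.2 (mem_of_mem_erase h)), card_erase_add_one hj.1, hc]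
    · have hsdiff : insert i (A.erase j) \ B = (A \ B).erase j := by
        rw [insert_sdiff_of_mem _ hi.1, erase_sdiff_comm]
      rw [hsdiff, card_erase_of_mem (mem_sdiff.2 hj), hd, Nat.add_sub_cancel]

end Dominance

section Ballot

variable {𝒜 : Finset (Finset ℕ)} {A : Finset ℕ} {k s : ℕ}

theorem card_image_mul_add (t j : ℕ) : #((range t).image (· * (s + 1) + j)) = t := by
  rw [card_image_of_injective _ fun a b hab ↦ by simpa using hab, card_range]

theorem min_le_card_filter_lt_image_mul_add {j : ℕ} (hj : j ≤ s) (m : ℕ) :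
    min k (m / (s + 1)) ≤ #{x ∈ (range k).image (· * (s + 1) + j) | x < m} := by
  rw [← card_image_mul_add (s := s) (min k (m / (s + 1))) j]
  refine card_le_card fun x hx ↦ ?_
  simp only [mem_image, mem_range, mem_filter, lt_min_iff] at hx ⊢
  obtain ⟨q, ⟨hqk, hqm⟩, rfl⟩ := hx
  have hq := (Nat.le_div_iff_mul_le s.succ_pos).1 (Nat.succ_le_of_lt hqm)
  exact ⟨⟨q, hqk, rfl⟩, by rw [Nat.succ_mul, Nat.succ_eq_add_one] at hq; omega⟩

theorem disjoint_image_mul_add {i j : ℕ} (hi : i ≤ s) (hj : j ≤ s) (hij : i ≠ j) (k : ℕ) :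
    Disjoint ((range k).image (· * (s + 1) + i)) ((range k).image (· * (s + 1) + j)) := by
  refine disjoint_left.2 fun x hx hy ↦ hij ?_
  obtain ⟨a, -, rfl⟩ := mem_image.1 hx
  obtain ⟨b, -, hb⟩ := mem_image.1 hy
  have hmod := congrArg (· % (s + 1)) hb
  simpa only [Nat.mul_add_mod', Nat.mod_eq_of_lt (Nat.lt_succ_of_le hi),
    Nat.mod_eq_of_lt (Nat.lt_succ_of_le hj)] using hmod.symm

-- If all these inequalities failed, the residue classes modulo `s + 1` in `range (#A * (s + 1))`
-- would form a matching in `𝒜`.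
theorem ShiftedOn.exists_le_card_filter_lt (h : ShiftedOn .univ 𝒜) (hs : ¬ HasMatching 𝒜 (s + 1))
    (hA : A ∈ 𝒜) : ∃ i ∈ Icc 1 #A, i ≤ #{x ∈ A | x < i * (s + 1) - 1} := by
  by_contra! hcon
  refine hs ⟨fun j ↦ (range #A).image (· * (s + 1) + (j : ℕ)), fun j ↦ ?_, fun i j hij ↦
    disjoint_image_mul_add i.is_le j.is_le (Fin.val_injective.ne hij) _⟩
  refine h.mem_of_card_filter_lt_le hA (card_image_mul_add _ _).symm fun m ↦
    le_trans (le_min (card_filter_le _ _) ?_) (min_le_card_filter_lt_image_mul_add j.is_le m)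
  obtain hi | hi := le_or_gt (m / (s + 1) + 1) #A
  · have hm : m < (m / (s + 1) + 1) * (s + 1) :=
      Nat.lt_mul_of_div_lt (Nat.lt_succ_self _) s.succ_pos
    have hlt := hcon (m / (s + 1) + 1) (mem_Icc.2 ⟨Nat.le_add_left 1 _, hi⟩)
    have hle : #{x ∈ A | x < m} ≤ #{x ∈ A | x < (m / (s + 1) + 1) * (s + 1) - 1} :=
      card_le_card (monotone_filter_right A fun x _ hx ↦ by omega)
    omega
  · exact (card_filter_le _ _).trans (by omega)

end Ballot

section ShadowBound

variable {α : Type*} [DecidableEq α] {T : ℕ → Finset α} {E : Finset α} {x : α} {i l : ℕ}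

/-- The last `i ≤ l` such that `E` has at least `i - d` elements in `T i`. Deleting from `E` an
element that it has in `T i`, for the last `i` with `d = 0`, does not change the last `i` with
`d = 1`. -/
def lastIndex (T : ℕ → Finset α) (l d : ℕ) (E : Finset α) : ℕ :=
  Nat.findGreatest (fun i ↦ i ≤ #(E ∩ T i) + d) l

theorem le_lastIndex {d : ℕ} (hi : i ≤ l) (hEi : i ≤ #(E ∩ T i) + d) : i ≤ lastIndex T l d E :=
  Nat.le_findGreatest hi hEi

theorem lastIndex_le {d : ℕ} : lastIndex T l d E ≤ l := Nat.findGreatest_le l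

theorem lastIndex_le_card {d : ℕ} : lastIndex T l d E ≤ #(E ∩ T (lastIndex T l d E)) + d :=
  Nat.findGreatest_spec (P := fun i ↦ i ≤ #(E ∩ T i) + d) (Nat.zero_le l) (Nat.zero_le _)

theorem card_inter_lastIndex (hT : Monotone T) (hE : #E ≤ l) :
    #(E ∩ T (lastIndex T l 0 E)) = lastIndex T l 0 E := by
  refine le_antisymm ?_ (lastIndex_le_card (d := 0))
  by_contra! hlt
  have hnext : lastIndex T l 0 E + 1 ≤ #(E ∩ T (lastIndex T l 0 E + 1)) :=
    Nat.succ_le_of_lt (hlt.trans_le (card_le_card (inter_subset_inter_left (hT (Nat.le_succ _)))))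
  have hnl : lastIndex T l 0 E + 1 ≤ l :=
    hnext.trans ((card_le_card inter_subset_left).trans hE)
  exact (Nat.lt_succ_self _).not_ge (le_lastIndex hnl hnext)

theorem card_erase_inter_add_one (hx : x ∈ E) (hxi : x ∈ T i) :
    #(E.erase x ∩ T i) + 1 = #(E ∩ T i) := by
  rw [erase_inter, card_erase_add_one (mem_inter.2 ⟨hx, hxi⟩)]

theorem lastIndex_erase (hT : Monotone T) (hx : x ∈ E) (hxT : x ∈ T (lastIndex T l 0 E)) :
    lastIndex T l 1 (E.erase x) = lastIndex T l 0 E := by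
  have hle : lastIndex T l 0 E ≤ lastIndex T l 1 (E.erase x) :=
    le_lastIndex (T := T) lastIndex_le (by
      rw [card_erase_inter_add_one hx hxT]
      exact lastIndex_le_card)
  refine hle.antisymm' (le_lastIndex lastIndex_le ?_)
  have hspec := lastIndex_le_card (T := T) (l := l) (d := 1) (E := E.erase x)
  rwa [card_erase_inter_add_one hx (hT hle hxT)] at hspec

variable {𝒢 : Finset (Finset α)}

theorem card_filter_lastIndex_mul_le (hT : Monotone T) (h𝒢 : ∀ E ∈ 𝒢, #E ≤ l) (i : ℕ) :
    #{E ∈ 𝒢 | lastIndex T l 0 E = i} * i ≤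
      #{E ∈ ∂ 𝒢 | lastIndex T l 1 E = i} * (#(T i) - (i - 1)) := by
  refine card_mul_le_card_mul (fun E E' ↦ ∃ x ∈ E ∩ T i, E.erase x = E') (fun E hE ↦ ?_)
    fun E' hE' ↦ ?_
  · obtain ⟨hE𝒢, rfl⟩ := mem_filter.1 hE
    nth_rw 1 [← card_inter_lastIndex hT (h𝒢 E hE𝒢), ← card_image_of_injOn
      ((erase_injOn E).mono (coe_subset.2 inter_subset_left))]
    refine card_le_card (image_subset_iff.2 fun x hx ↦ mem_filter.2 ⟨?_, x, hx, rfl⟩)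
    obtain ⟨hxE, hxT⟩ := mem_inter.1 hx
    exact mem_filter.2 ⟨erase_mem_shadow hE𝒢 hxE, lastIndex_erase hT hxE hxT⟩
  · calc _ ≤ #((T i \ E').image (insert · E')) := card_le_card fun E hE ↦ ?_
      _ ≤ #(T i \ E') := card_image_le
      _ ≤ #(T i) - (i - 1) := ?_
    · obtain ⟨-, x, hx, rfl⟩ := mem_filter.1 hE
      obtain ⟨hxE, hxT⟩ := mem_inter.1 hx
      exact mem_image.2 ⟨x, mem_sdiff.2 ⟨hxT, notMem_erase x E⟩, insert_erase hxE⟩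
    · obtain ⟨-, rfl⟩ := mem_filter.1 hE'
      rw [card_sdiff]
      have := lastIndex_le_card (T := T) (l := l) (d := 1) (E := E')
      omega

-- Double counting, for each `i`, the inclusions between the members `E` of `𝒢` with
-- `lastIndex T l 0 E = i` and the sets `E` in the shadow with `lastIndex T l 1 E = i`: each of the
-- former contains `i` of the latter.
theorem card_le_mul_card_shadow {c : ℝ} (hc : 0 ≤ c) (hT : Monotone T)
    (h𝒢 : ∀ E ∈ 𝒢, #E ≤ l ∧ ∃ i ∈ Icc 1 l, i ≤ #(E ∩ T i))
    (hcT : ∀ i ∈ Icc 1 l, (#(T i) : ℝ) ≤ c * i + (i - 1)) : (#𝒢 : ℝ) ≤ c * #(∂ 𝒢) := by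
  have hmaps : ∀ E ∈ 𝒢, lastIndex T l 0 E ∈ Icc 1 l := fun E hE ↦ by
    obtain ⟨-, i, hi, hEi⟩ := h𝒢 E hE
    obtain ⟨hi1, hil⟩ := mem_Icc.1 hi
    exact mem_Icc.2 ⟨hi1.trans (le_lastIndex hil hEi), lastIndex_le⟩
  have hfiber : ∀ i ∈ Icc 1 l, (#{E ∈ 𝒢 | lastIndex T l 0 E = i} : ℝ) ≤
      c * #{E ∈ ∂ 𝒢 | lastIndex T l 1 E = i} := fun i hi ↦ by
    have hi1 := (mem_Icc.1 hi).1
    have hi0 : (0 : ℝ) < i := Nat.cast_pos.2 hi1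
    have hsub : ((#(T i) - (i - 1) : ℕ) : ℝ) ≤ c * i := by
      obtain h | h := le_total (#(T i)) (i - 1)
      · rw [Nat.sub_eq_zero_of_le h, Nat.cast_zero]
        positivity
      · rw [Nat.cast_sub h, Nat.cast_pred hi1]
        linarith [hcT i hi]
    refine le_of_mul_le_mul_right ?_ hi0
    calc (#{E ∈ 𝒢 | lastIndex T l 0 E = i} * i : ℝ)
        ≤ #{E ∈ ∂ 𝒢 | lastIndex T l 1 E = i} * (#(T i) - (i - 1) : ℕ) := mod_cast
          card_filter_lastIndex_mul_le hT (fun E hE ↦ (h𝒢 E hE).1) i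
      _ ≤ #{E ∈ ∂ 𝒢 | lastIndex T l 1 E = i} * (c * i) := by gcongr
      _ = c * #{E ∈ ∂ 𝒢 | lastIndex T l 1 E = i} * i := by ring
  have hshadow : ∑ i ∈ Icc 1 l, #{E ∈ ∂ 𝒢 | lastIndex T l 1 E = i} ≤ #(∂ 𝒢) := by
    rw [← card_biUnion fun i _ j _ hij ↦ disjoint_filter.2 fun E _ hi hj ↦ hij (hi.symm.trans hj)]
    exact card_le_card (biUnion_subset.2 fun i _ ↦ filter_subset _ _)
  calc (#𝒢 : ℝ) = ∑ i ∈ Icc 1 l, (#{E ∈ 𝒢 | lastIndex T l 0 E = i} : ℝ) := by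
        rw [card_eq_sum_card_fiberwise hmaps, Nat.cast_sum]
    _ ≤ ∑ i ∈ Icc 1 l, c * (#{E ∈ ∂ 𝒢 | lastIndex T l 1 E = i} : ℝ) := sum_le_sum hfiber
    _ = c * (∑ i ∈ Icc 1 l, #{E ∈ ∂ 𝒢 | lastIndex T l 1 E = i} : ℕ) := by
        rw [← mul_sum, Nat.cast_sum]
    _ ≤ c * #(∂ 𝒢) := by gcongr

end ShadowBound

section DisjointPairs

variable {α : Type*} [DecidableEq α] {𝒜 ℬ : Finset (Finset α)} {V : Finset α} {v : α} {l m : ℕ}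

theorem nonMemberSubfamily_subset_powersetCard (h𝒜 : 𝒜 ⊆ (insert v V).powersetCard l) :
    𝒜.nonMemberSubfamily v ⊆ V.powersetCard l := fun E hE ↦ by
  obtain ⟨hE, hvE⟩ := mem_nonMemberSubfamily.1 hE
  obtain ⟨hEV, hEl⟩ := mem_powersetCard.1 (h𝒜 hE)
  exact mem_powersetCard.2 ⟨(subset_insert_iff_of_notMem hvE).1 hEV, hEl⟩

theorem memberSubfamily_subset_powersetCard (h𝒜 : 𝒜 ⊆ (insert v V).powersetCard (l + 1)) :
    𝒜.memberSubfamily v ⊆ V.powersetCard l := fun E hE ↦ by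
  obtain ⟨hE, hvE⟩ := mem_memberSubfamily.1 hE
  obtain ⟨hEV, hEl⟩ := mem_powersetCard.1 (h𝒜 hE)
  rw [card_insert_of_notMem hvE] at hEl
  exact mem_powersetCard.2 ⟨(insert_subset_insert_iff hvE).1 hEV, Nat.succ_injective hEl⟩

theorem sum_nonMemberSubfamily_add_sum_memberSubfamily {M : Type*} [AddCommMonoid M] (v : α)
    (𝒜 : Finset (Finset α)) (f : Finset α → M) :
    ∑ A ∈ 𝒜.nonMemberSubfamily v, f A + ∑ A ∈ 𝒜.memberSubfamily v, f (insert v A) =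
      ∑ A ∈ 𝒜, f A := by
  rw [← sum_filter_not_add_sum_filter 𝒜 (v ∈ ·), ← image_insert_memberSubfamily, sum_image]
  · rfl
  · exact (insert_erase_invOn.2.injOn).mono fun A hA ↦ (mem_memberSubfamily.1 hA).2

/-- The pairs of disjoint sets, the first from `𝒜` and the second from `ℬ`. -/
def disjPairs (𝒜 ℬ : Finset (Finset α)) : Finset (Finset α × Finset α) :=
  {p ∈ 𝒜 ×ˢ ℬ | Disjoint p.1 p.2}

theorem card_disjPairs_eq_sum (𝒜 ℬ : Finset (Finset α)) :
    #(disjPairs 𝒜 ℬ) = ∑ A ∈ 𝒜, ∑ B ∈ ℬ, if Disjoint A B then 1 else 0 := by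
  rw [disjPairs, card_filter, sum_product]

theorem card_disjPairs_split (v : α) (𝒜 ℬ : Finset (Finset α)) :
    #(disjPairs 𝒜 ℬ) = #(disjPairs (𝒜.nonMemberSubfamily v) (ℬ.nonMemberSubfamily v)) +
      #(disjPairs (𝒜.nonMemberSubfamily v) (ℬ.memberSubfamily v)) +
      #(disjPairs (𝒜.memberSubfamily v) (ℬ.nonMemberSubfamily v)) := by
  simp only [card_disjPairs_eq_sum]
  rw [← sum_nonMemberSubfamily_add_sum_memberSubfamily v 𝒜, ← sum_add_distrib]
  congr 1 <;> refine sum_congr rfl fun A hA ↦ ?_ <;>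
    rw [← sum_nonMemberSubfamily_add_sum_memberSubfamily v ℬ]
  · congr 1
    refine sum_congr rfl fun B _ ↦ ?_
    simp only [disjoint_insert_right, (mem_nonMemberSubfamily.1 hA).2, not_false_eq_true, true_and]
  · rw [sum_eq_zero (s := ℬ.memberSubfamily v) fun B _ ↦ if_neg fun h ↦
      disjoint_left.1 h (mem_insert_self v A) (mem_insert_self v B), add_zero]
    refine sum_congr rfl fun B hB ↦ ?_
    simp only [disjoint_insert_left, (mem_nonMemberSubfamily.1 hB).2, not_false_eq_true, true_and]

theorem card_disjPairs_powersetCard_right (h𝒜 : 𝒜 ⊆ V.powersetCard l) (m : ℕ) :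
    #(disjPairs 𝒜 (V.powersetCard m)) = #𝒜 * (#V - l).choose m := by
  rw [card_disjPairs_eq_sum, ← smul_eq_mul, ← sum_const]
  refine sum_congr rfl fun A hA ↦ ?_
  obtain ⟨hAV, hAl⟩ := mem_powersetCard.1 (h𝒜 hA)
  rw [← card_filter, ← hAl, ← card_sdiff_of_subset hAV, ← card_powersetCard]
  congr 1
  ext B
  rw [mem_filter, mem_powersetCard, mem_powersetCard, subset_sdiff, disjoint_comm]
  tauto

end DisjointPairs

section LayerDensity

variable {α : Type*} {𝒜 : Finset (Finset α)} {V : Finset α} {m : ℕ}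

/-- The proportion of the `m`-subsets of `V` that lie in `𝒜`. -/
noncomputable def layerDensity (V : Finset α) (m : ℕ) (𝒜 : Finset (Finset α)) : ℝ :=
  #𝒜 / (#V).choose m

theorem layerDensity_nonneg : 0 ≤ layerDensity V m 𝒜 := by
  unfold layerDensity
  positivity

theorem layerDensity_mul_choose (h𝒜 : 𝒜 ⊆ V.powersetCard m) :
    layerDensity V m 𝒜 * (#V).choose m = #𝒜 := by
  refine div_mul_cancel_of_imp fun h ↦ ?_
  have hcard := card_le_card h𝒜
  rw [card_powersetCard, Nat.cast_eq_zero.1 h] at hcard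
  exact mod_cast Nat.le_zero.1 hcard

end LayerDensity

section LocalLYM

variable {α : Type*} [DecidableEq α] {𝒜 ℬ : Finset (Finset α)} {V : Finset α} {v : α} {l : ℕ}

theorem card_mul_le_card_mul_of_insert_mem (h𝒜 : 𝒜 ⊆ V.powersetCard l)
    (hℬ : ℬ ⊆ V.powersetCard (l + 1)) (h : ∀ E ∈ 𝒜, ∀ x ∈ V \ E, insert x E ∈ ℬ) :
    #𝒜 * (#V - l) ≤ #ℬ * (l + 1) := by
  refine card_mul_le_card_mul (fun E E' ↦ ∃ x ∈ V \ E, insert x E = E') (fun E hE ↦ ?_)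
    fun E' hE' ↦ ?_
  · obtain ⟨hEV, hEl⟩ := mem_powersetCard.1 (h𝒜 hE)
    rw [← hEl, ← card_sdiff_of_subset hEV, ← card_image_of_injOn (f := (insert · E))]
    · refine card_le_card (image_subset_iff.2 fun x hx ↦ mem_filter.2 ⟨h E hE x hx, x, hx, rfl⟩)
    · exact fun x hx y _ hxy ↦ (insert_inj (mem_sdiff.1 hx).2).1 hxy
  · rw [← (mem_powersetCard.1 (hℬ hE')).2]
    refine (card_le_card fun E hE ↦ ?_).trans (card_image_le (s := E') (f := E'.erase))
    obtain ⟨-, x, hx, rfl⟩ := mem_filter.1 hE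
    exact mem_image.2 ⟨x, mem_insert_self x E, erase_insert (mem_sdiff.1 hx).2⟩

theorem layerDensity_le_of_insert_mem (hl : l < #V) (h𝒜 : 𝒜 ⊆ V.powersetCard l)
    (hℬ : ℬ ⊆ V.powersetCard (l + 1)) (h : ∀ E ∈ 𝒜, ∀ x ∈ V \ E, insert x E ∈ ℬ) :
    layerDensity V l 𝒜 ≤ layerDensity V (l + 1) ℬ := by
  have hcount := card_mul_le_card_mul_of_insert_mem h𝒜 hℬ h
  have hchoose := Nat.choose_succ_right_eq (#V) l
  have hl1 : 0 < (#V).choose l := Nat.choose_pos hl.le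
  unfold layerDensity
  rw [div_le_div_iff₀ (mod_cast hl1) (mod_cast Nat.choose_pos hl)]
  norm_cast
  refine le_of_mul_le_mul_right ?_ l.succ_pos
  calc #𝒜 * (#V).choose (l + 1) * (l + 1) = #𝒜 * (#V - l) * (#V).choose l := by
        rw [mul_assoc, hchoose]
        ring
    _ ≤ #ℬ * (l + 1) * (#V).choose l := by gcongr
    _ = #ℬ * (#V).choose l * (l + 1) := by ring

theorem choose_eq_div_mul_choose_succ (N l : ℕ) :
    (N.choose l : ℝ) = (l + 1) / (N + 1) * (N + 1).choose (l + 1) := by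
  rw [div_mul_eq_mul_div, eq_div_iff (by positivity)]
  exact_mod_cast (mul_comm _ _).trans ((Nat.add_one_mul_choose_eq N l).trans (mul_comm _ _))

theorem choose_succ_eq_div_mul_choose_succ (N l : ℕ) :
    (N.choose (l + 1) : ℝ) = (1 - (l + 1) / (N + 1)) * (N + 1).choose (l + 1) := by
  have hpascal : ((N + 1).choose (l + 1) : ℝ) = N.choose l + N.choose (l + 1) :=
    mod_cast Nat.choose_succ_succ N l
  linarith [choose_eq_div_mul_choose_succ N l]

theorem layerDensity_insert (hv : v ∉ V) (h𝒜 : 𝒜 ⊆ (insert v V).powersetCard (l + 1))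
    (hl : l ≤ #V) : layerDensity (insert v V) (l + 1) 𝒜 =
      (1 - (l + 1) / (#V + 1)) * layerDensity V (l + 1) (𝒜.nonMemberSubfamily v) +
        (l + 1) / (#V + 1) * layerDensity V l (𝒜.memberSubfamily v) := by
  have h1 := layerDensity_mul_choose (memberSubfamily_subset_powersetCard h𝒜)
  have h0 := layerDensity_mul_choose (nonMemberSubfamily_subset_powersetCard h𝒜)
  rw [choose_eq_div_mul_choose_succ] at h1
  rw [choose_succ_eq_div_mul_choose_succ] at h0
  have hchoose : ((#V + 1).choose (l + 1) : ℝ) ≠ 0 :=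
    Nat.cast_ne_zero.2 (Nat.choose_pos (Nat.succ_le_succ hl)).ne'
  rw [layerDensity, card_insert_of_notMem hv, div_eq_iff hchoose,
    ← card_memberSubfamily_add_card_nonMemberSubfamily v 𝒜, Nat.cast_add, ← h0, ← h1]
  ring

end LocalLYM

section Correlation

variable {α : Type*} {𝒜 ℬ : Finset (Finset α)} {V : Finset α} {v : α} {l m : ℕ}

theorem ShiftedOn.nonMemberSubfamily [DecidableEq α] [LT α] (h : ShiftedOn V 𝒜) (hv : v ∉ V) :
    ShiftedOn V (𝒜.nonMemberSubfamily v) := fun A hA i hi j hj hij hiA ↦ by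
  obtain ⟨hA, hvA⟩ := mem_nonMemberSubfamily.1 hA
  refine mem_nonMemberSubfamily.2 ⟨h A hA i hi j hj hij hiA, ?_⟩
  grind

theorem ShiftedOn.memberSubfamily [DecidableEq α] [LT α] (h : ShiftedOn V 𝒜) (hv : v ∉ V) :
    ShiftedOn V (𝒜.memberSubfamily v) := fun A hA i hi j hj hij hiA ↦ by
  obtain ⟨hA, hvA⟩ := mem_memberSubfamily.1 hA
  have hiv : i ≠ v := fun h ↦ hv (h ▸ hi)
  have hjv : j ≠ v := fun h ↦ hvA (h ▸ hj)
  refine mem_memberSubfamily.2 ⟨?_, by grind⟩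
  rw [insert_comm, ← erase_insert_of_ne hjv.symm]
  exact h _ hA i hi j (mem_insert_of_mem hj) hij (by grind)

theorem disjPairs_eq_empty [DecidableEq α] (h𝒜 : 𝒜 ⊆ V.powersetCard l)
    (hℬ : ℬ ⊆ V.powersetCard m) (h : #V < l + m) : disjPairs 𝒜 ℬ = ∅ := by
  refine filter_eq_empty_iff.2 fun p hp hd ↦ h.not_ge ?_
  obtain ⟨hA, hB⟩ := mem_product.1 hp
  obtain ⟨hAV, rfl⟩ := mem_powersetCard.1 (h𝒜 hA)
  obtain ⟨hBV, rfl⟩ := mem_powersetCard.1 (hℬ hB)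
  rw [← card_union_of_disjoint hd]
  exact card_le_card (union_subset hAV hBV)

theorem card_disjPairs_le_mul [DecidableEq α] (𝒜 ℬ : Finset (Finset α)) :
    #(disjPairs 𝒜 ℬ) ≤ #𝒜 * #ℬ :=
  (card_filter_le _ _).trans_eq (card_product _ _)

theorem ShiftedOn.layerDensity_memberSubfamily_le [LinearOrder α] (hvV : ∀ x ∈ V, x < v)
    (h𝒜 : 𝒜 ⊆ (insert v V).powersetCard (l + 1)) (h : ShiftedOn (insert v V : Finset α) 𝒜)
    (hl : l < #V) : layerDensity V l (𝒜.memberSubfamily v) ≤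
      layerDensity V (l + 1) (𝒜.nonMemberSubfamily v) := by
  refine layerDensity_le_of_insert_mem hl (memberSubfamily_subset_powersetCard h𝒜)
    (nonMemberSubfamily_subset_powersetCard h𝒜) fun E hE x hx ↦ ?_
  obtain ⟨hE, hvE⟩ := mem_memberSubfamily.1 hE
  obtain ⟨hxV, hxE⟩ := mem_sdiff.1 hx
  have hxv := hvV x hxV
  refine mem_nonMemberSubfamily.2 ⟨?_, by grind⟩
  rw [← erase_insert hvE]
  exact h _ hE x (mem_insert_of_mem hxV) v (mem_insert_self v E) hxv (by grind)

theorem card_disjPairs_le_of_degenerate [DecidableEq α] (h𝒜 : 𝒜 ⊆ V.powersetCard l)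
    (hℬ : ℬ ⊆ V.powersetCard m) (h : l = 0 ∨ m = 0 ∨ #V < l + m) :
    (#(disjPairs 𝒜 ℬ) : ℝ) ≤ layerDensity V l 𝒜 * layerDensity V m ℬ *
      ((#V).choose l * (#V - l).choose m) := by
  by_cases hlt : #V < l + m
  · rw [disjPairs_eq_empty h𝒜 hℬ hlt, card_empty, Nat.cast_zero]
    exact mul_nonneg (mul_nonneg layerDensity_nonneg layerDensity_nonneg) (by positivity)
  have hchoose : (#V - l).choose m = (#V).choose m := by
    obtain rfl | rfl | h := h
    · rw [Nat.sub_zero]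
    · rw [Nat.choose_zero_right, Nat.choose_zero_right]
    · exact absurd h hlt
  rw [hchoose, mul_mul_mul_comm, layerDensity_mul_choose h𝒜, layerDensity_mul_choose hℬ]
  exact_mod_cast card_disjPairs_le_mul 𝒜 ℬ

theorem choose_mul_choose_eq_div_mul (a l m : ℕ) :
    ((l + 1 + a).choose (l + 1) * a.choose m : ℝ) = (m + 1) / ((l + 1 + a : ℕ) + 1) *
      ((l + 1 + a + 1).choose (l + 1) * (a + 1).choose (m + 1)) := by
  rw [choose_succ_eq_div_mul_choose_succ, choose_eq_div_mul_choose_succ a m]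
  push_cast
  field_simp
  ring

theorem mul_choose_mul_choose_add_le (a l m : ℕ) {g₀ g₁ h₀ h₁ : ℝ} (hg : g₁ ≤ g₀) (hh : h₁ ≤ h₀) :
    g₀ * h₀ * ((l + 1 + a).choose (l + 1) * a.choose (m + 1)) +
        g₀ * h₁ * ((l + 1 + a).choose (l + 1) * a.choose m) +
        g₁ * h₀ * ((l + 1 + a).choose l * (a + 1).choose (m + 1)) ≤
      ((1 - (l + 1) / ((l + 1 + a : ℕ) + 1)) * g₀ + (l + 1) / ((l + 1 + a : ℕ) + 1) * g₁) *
        ((1 - (m + 1) / ((l + 1 + a : ℕ) + 1)) * h₀ + (m + 1) / ((l + 1 + a : ℕ) + 1) * h₁) *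
        ((l + 1 + a + 1).choose (l + 1) * (a + 1).choose (m + 1)) := by
  have h01 := choose_mul_choose_eq_div_mul a l m
  have h10 := choose_eq_div_mul_choose_succ (l + 1 + a) l
  have hleft : ((l + 1 + a + 1).choose (l + 1) : ℝ) =
      (l + 1 + a).choose l + (l + 1 + a).choose (l + 1) := mod_cast Nat.choose_succ_succ _ _
  have hright : ((a + 1).choose (m + 1) : ℝ) = a.choose m + a.choose (m + 1) :=
    mod_cast Nat.choose_succ_succ _ _
  set p : ℝ := (l + 1) / ((l + 1 + a : ℕ) + 1)
  set r : ℝ := (m + 1) / ((l + 1 + a : ℕ) + 1)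
  set t : ℝ := (l + 1 + a + 1).choose (l + 1) * (a + 1).choose (m + 1)
  have hp : 0 ≤ p := by positivity
  have hr : 0 ≤ r := by positivity
  have ht : 0 ≤ t := by positivity
  have h10 : ((l + 1 + a).choose l * (a + 1).choose (m + 1) : ℝ) = p * t := by
    rw [h10, mul_assoc]
  have h00 : ((l + 1 + a).choose (l + 1) * a.choose (m + 1) : ℝ) = (1 - p - r) * t := by
    linear_combination -h01 - h10 - (a + 1).choose (m + 1) * hleft -
      (l + 1 + a).choose (l + 1) * hright
  rw [h00, h01, h10]
  have hdiff : 0 ≤ p * r * ((g₀ - g₁) * (h₀ - h₁)) * t :=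
    mul_nonneg (mul_nonneg (mul_nonneg hp hr) (mul_nonneg (sub_nonneg.2 hg) (sub_nonneg.2 hh))) ht
  linarith

-- The right-hand side is the value expected if belonging to `𝒜` and belonging to `ℬ` were
-- independent events for a random pair of disjoint sets. Splitting off the largest element, both
-- families become denser if it is left out, and it cannot lie in both members of the pair.
theorem card_disjPairs_le [LinearOrder α] (h𝒜 : 𝒜 ⊆ V.powersetCard l)
    (hℬ : ℬ ⊆ V.powersetCard m) (hs𝒜 : ShiftedOn V 𝒜) (hsℬ : ShiftedOn V ℬ) :
    (#(disjPairs 𝒜 ℬ) : ℝ) ≤ layerDensity V l 𝒜 * layerDensity V m ℬ *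
      ((#V).choose l * (#V - l).choose m) := by
  induction V using Finset.induction_on_max generalizing l m 𝒜 ℬ with
  | empty => exact card_disjPairs_le_of_degenerate h𝒜 hℬ (by rw [card_empty]; omega)
  | insert v V hvV ih =>
    have hv : v ∉ V := fun h ↦ lt_irrefl v (hvV v h)
    have hVi : (V : Set α) ⊆ (insert v V : Finset α) := coe_subset.2 (subset_insert v V)
    have hcard := card_insert_of_notMem hv
    obtain hdeg | ⟨hl, hm, hlm⟩ : (l = 0 ∨ m = 0 ∨ #(insert v V) < l + m) ∨
      l ≠ 0 ∧ m ≠ 0 ∧ l + m ≤ #(insert v V) := by omega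
    · exact card_disjPairs_le_of_degenerate h𝒜 hℬ hdeg
    obtain ⟨l, rfl⟩ := Nat.exists_eq_add_one_of_ne_zero hl
    obtain ⟨m, rfl⟩ := Nat.exists_eq_add_one_of_ne_zero hm
    obtain ⟨a, ha⟩ : ∃ a, #V = l + 1 + a := Nat.exists_eq_add_of_le (by omega)
    have h0 := nonMemberSubfamily_subset_powersetCard h𝒜
    have h1 := memberSubfamily_subset_powersetCard h𝒜
    have k0 := nonMemberSubfamily_subset_powersetCard hℬ
    have k1 := memberSubfamily_subset_powersetCard hℬ
    have hs0 := (hs𝒜.mono hVi).nonMemberSubfamily hv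
    have hs1 := (hs𝒜.mono hVi).memberSubfamily hv
    have ks0 := (hsℬ.mono hVi).nonMemberSubfamily hv
    have ks1 := (hsℬ.mono hVi).memberSubfamily hv
    have h𝒜le := hs𝒜.layerDensity_memberSubfamily_le hvV h𝒜 (by omega)
    have hℬle := hsℬ.layerDensity_memberSubfamily_le hvV hℬ (by omega)
    have h00 := ih h0 k0 hs0 ks0
    have h01 := ih h0 k1 hs0 ks1
    have h10 := ih h1 k0 hs1 ks0
    rw [card_disjPairs_split v, layerDensity_insert hv h𝒜 (by omega),
      layerDensity_insert hv hℬ (by omega), hcard]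
    simp only [ha, Nat.add_sub_cancel_left, show l + 1 + a - l = a + 1 by omega,
      show l + 1 + a + 1 - (l + 1) = a + 1 by omega] at h𝒜le hℬle h00 h01 h10 ⊢
    refine le_trans ?_ (mul_choose_mul_choose_add_le a l m h𝒜le hℬle)
    push_cast
    exact add_le_add (add_le_add h00 h01) h10

end Correlation

section RandomPermutation

open Equiv.Perm (ofSubtype ofSubtype_apply_of_mem ofSubtype_apply_mem_iff_mem)
open scoped BigOperators Pointwise

theorem expect_smul_eq_expect {G H X : Type*} [Group G] [Fintype G] [Group H] [MulAction H X]
    (φ : G →* H) {Y : Finset X} {y : X} (hy : y ∈ Y) (hY : ∀ g, ∀ x ∈ Y, φ g • x ∈ Y)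
    (htrans : ∀ x ∈ Y, ∃ g, φ g • y = x) (f : X → ℝ) :
    𝔼 g, f (φ g • y) = 𝔼 x ∈ Y, f x := by
  have hx : ∀ x ∈ Y, 𝔼 g, f (φ g • x) = 𝔼 g, f (φ g • y) := fun x hx ↦ by
    obtain ⟨h, rfl⟩ := htrans x hx
    exact Fintype.expect_equiv (Equiv.mulRight h) _ _ fun g ↦ by
      rw [Equiv.coe_mulRight, map_mul, mul_smul]
  have hg : ∀ g, 𝔼 x ∈ Y, f (φ g • x) = 𝔼 x ∈ Y, f x := fun g ↦
    expect_nbij' (φ g • ·) (φ g⁻¹ • ·) (hY g) (hY g⁻¹)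
      (fun x _ ↦ by rw [map_inv, inv_smul_smul]) (fun x _ ↦ by rw [map_inv, smul_inv_smul])
      fun _ _ ↦ rfl
  calc 𝔼 g, f (φ g • y) = 𝔼 x ∈ Y, 𝔼 g, f (φ g • x) := by
        rw [expect_congr rfl hx, expect_const ⟨y, hy⟩]
    _ = 𝔼 g, 𝔼 x ∈ Y, f (φ g • x) := expect_comm _ _ _
    _ = 𝔼 x ∈ Y, f x := by
        rw [expect_congr rfl fun g _ ↦ hg g, Fintype.expect_const]

variable {α : Type*} [DecidableEq α] {V A B A' B' : Finset α} {𝒜 ℬ : Finset (Finset α)} {l m : ℕ}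

theorem ofSubtype_smul_mem_powersetCard (σ : Perm V) (hA : A ∈ V.powersetCard m) :
    ofSubtype σ • A ∈ V.powersetCard m := by
  obtain ⟨hAV, hAm⟩ := mem_powersetCard.1 hA
  refine mem_powersetCard.2 ⟨?_, by rw [card_smul_finset, hAm]⟩
  exact image_subset_iff.2 fun x hx ↦ (ofSubtype_apply_mem_iff_mem σ x).2 (hAV hx)

theorem exists_perm_ofSubtype_apply_eq {f : α → α} (hAV : A ⊆ V) (hf : Set.InjOn f A)
    (hfV : Set.MapsTo f A V) : ∃ σ : Perm V, ∀ x ∈ A, ofSubtype σ x = f x := by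
  obtain ⟨σ, hσ⟩ := Set.MapsTo.exists_equiv_extend_of_card_eq (t := V) (Fintype.card_coe V)
    (s := {x : V | (x : α) ∈ A}) (f := fun x ↦ f x) (fun x hx ↦ hfV hx)
    fun x hx y hy hxy ↦ Subtype.ext (hf hx hy hxy)
  exact ⟨σ, fun x hx ↦ (ofSubtype_apply_of_mem σ (hAV hx)).trans (hσ ⟨x, hAV hx⟩ hx)⟩

theorem exists_perm_smul_eq (hAV : A ⊆ V) (hBV : B ⊆ V) (hAV' : A' ⊆ V) (hBV' : B' ⊆ V)
    (hAB : Disjoint A B) (hAB' : Disjoint A' B') (hA : #A = #A') (hB : #B = #B') :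
    ∃ σ : Perm V, ofSubtype σ • A = A' ∧ ofSubtype σ • B = B' := by
  obtain hα | hα := isEmpty_or_nonempty α
  · exact ⟨1, Subsingleton.elim _ _, Subsingleton.elim _ _⟩
  obtain ⟨f, hf⟩ := A.finite_toSet.exists_bijOn_of_encard_eq (t := (A' : Set α)) (by simpa using hA)
  obtain ⟨g, hg⟩ := B.finite_toSet.exists_bijOn_of_encard_eq (t := (B' : Set α)) (by simpa using hB)
  have hf' : Set.BijOn (A.piecewise f g) A A' :=
    hf.congr fun x hx ↦ (piecewise_eq_of_mem A f g hx).symm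
  have hg' : Set.BijOn (A.piecewise f g) B B' :=
    hg.congr fun x hx ↦ (piecewise_eq_of_notMem A f g (disjoint_right.1 hAB hx)).symm
  have hinj : Set.InjOn (A.piecewise f g) (A ∪ B : Finset α) := by
    rw [coe_union, Set.injOn_union (disjoint_coe.2 hAB)]
    exact ⟨hf'.injOn, hg'.injOn, fun x hx y hy h ↦
      disjoint_left.1 hAB' (hf'.mapsTo hx) (h ▸ hg'.mapsTo hy)⟩
  have hmaps : Set.MapsTo (A.piecewise f g) (A ∪ B : Finset α) V := by
    rw [coe_union]
    exact (hf'.mapsTo.mono_right (coe_subset.2 hAV')).union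
      (hg'.mapsTo.mono_right (coe_subset.2 hBV'))
  obtain ⟨σ, hσ⟩ := exists_perm_ofSubtype_apply_eq (union_subset hAV hBV) hinj hmaps
  refine ⟨σ, ?_, ?_⟩ <;> refine (image_congr fun x hx ↦ hσ x ?_).trans ?_
  · exact mem_union_left B hx
  · exact (image_eq_iff_bijOn_of_card hA.le).2 hf'
  · exact mem_union_right A hx
  · exact (image_eq_iff_bijOn_of_card hB.le).2 hg'

theorem expect_ite_smul_mem_and (hAB : (A, B) ∈ disjPairs (V.powersetCard l) (V.powersetCard m))
    (h𝒜 : 𝒜 ⊆ V.powersetCard l) (hℬ : ℬ ⊆ V.powersetCard m) :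
    𝔼 σ : Perm V, (if ofSubtype σ • A ∈ 𝒜 ∧ ofSubtype σ • B ∈ ℬ then 1 else 0 : ℝ) =
      #(disjPairs 𝒜 ℬ) / ((#V).choose l * (#V - l).choose m) := by
  have hexp := expect_smul_eq_expect (ofSubtype (p := (· ∈ V))) hAB
    (fun σ p hp ↦ ?_) (fun p hp ↦ ?_) fun p ↦ if p.1 ∈ 𝒜 ∧ p.2 ∈ ℬ then (1 : ℝ) else 0
  · rw [← Nat.cast_mul, ← card_powersetCard l V,
      ← card_disjPairs_powersetCard_right subset_rfl m]
    refine hexp.trans ?_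
    rw [expect_eq_sum_div_card, ← natCast_card_filter]
    congr 3
    ext p
    simp only [disjPairs, mem_filter, mem_product]
    exact ⟨fun h ↦ ⟨h.2, h.1.2⟩, fun h ↦ ⟨⟨⟨h𝒜 h.1.1, hℬ h.1.2⟩, h.2⟩, h.1⟩⟩
  · simp only [disjPairs, mem_filter, mem_product] at hp ⊢
    exact ⟨⟨ofSubtype_smul_mem_powersetCard σ hp.1.1, ofSubtype_smul_mem_powersetCard σ hp.1.2⟩,
      (disjoint_image (MulAction.injective _)).2 hp.2⟩
  · simp only [disjPairs, mem_filter, mem_product, mem_powersetCard] at hp hAB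
    obtain ⟨σ, hσ⟩ := exists_perm_smul_eq hAB.1.1.1 hAB.1.2.1 hp.1.1.1 hp.1.2.1 hAB.2 hp.2
      (hAB.1.1.2.trans hp.1.1.2.symm) (hAB.1.2.2.trans hp.1.2.2.symm)
    exact ⟨σ, Prod.ext hσ.1 hσ.2⟩

theorem expect_ite_smul_mem (hA : A ∈ V.powersetCard m) (h𝒜 : 𝒜 ⊆ V.powersetCard m) :
    𝔼 σ : Perm V, (if ofSubtype σ • A ∈ 𝒜 then 1 else 0 : ℝ) = layerDensity V m 𝒜 := by
  have hempty : ((A, ∅) : Finset α × Finset α) ∈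
      disjPairs (V.powersetCard m) (V.powersetCard 0) := by
    simp [disjPairs, hA]
  have h := expect_ite_smul_mem_and hempty h𝒜 subset_rfl
  rw [card_disjPairs_powersetCard_right h𝒜] at h
  simpa [layerDensity] using h

/-- The number of the sets `b i` that the permutation `σ` of `V` moves into `𝒜`. -/
def hitCount {ι : Type*} [Fintype ι] (𝒜 : Finset (Finset α)) (b : ι → Finset α) (σ : Perm V) : ℕ :=
  #{i | ofSubtype σ • b i ∈ 𝒜}

variable {ι : Type*} [Fintype ι] {b : ι → Finset α}

theorem natCast_hitCount (σ : Perm V) :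
    (hitCount 𝒜 b σ : ℝ) = ∑ i, if ofSubtype σ • b i ∈ 𝒜 then 1 else 0 :=
  natCast_card_filter _ _

theorem hitCount_mono (h : 𝒜 ⊆ ℬ) (σ : Perm V) : hitCount 𝒜 b σ ≤ hitCount ℬ b σ :=
  card_le_card (monotone_filter_right _ fun _ _ hi ↦ h hi)

theorem expect_hitCount (hb : ∀ i, b i ∈ V.powersetCard m) (h𝒜 : 𝒜 ⊆ V.powersetCard m) :
    𝔼 σ : Perm V, (hitCount 𝒜 b σ : ℝ) = layerDensity V m 𝒜 * Fintype.card ι := by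
  simp only [natCast_hitCount]
  rw [expect_sum_comm, sum_congr rfl fun i _ ↦ expect_ite_smul_mem (hb i) h𝒜, sum_const,
    card_univ, nsmul_eq_mul, mul_comm]

end RandomPermutation

section Concentration

open Equiv.Perm (ofSubtype)
open scoped BigOperators Pointwise

variable {α : Type*} [LinearOrder α] {V A B : Finset α} {𝒜 : Finset (Finset α)} {m : ℕ}

theorem expect_ite_smul_mem_and_le (hA : A ∈ V.powersetCard m) (hB : B ∈ V.powersetCard m)
    (hAB : Disjoint A B) (h𝒜 : 𝒜 ⊆ V.powersetCard m) (hs : ShiftedOn V 𝒜) :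
    𝔼 σ : Perm V, (if ofSubtype σ • A ∈ 𝒜 ∧ ofSubtype σ • B ∈ 𝒜 then 1 else 0 : ℝ) ≤
      layerDensity V m 𝒜 ^ 2 := by
  have hmem : (A, B) ∈ disjPairs (V.powersetCard m) (V.powersetCard m) :=
    mem_filter.2 ⟨mem_product.2 ⟨hA, hB⟩, hAB⟩
  rw [expect_ite_smul_mem_and hmem h𝒜 h𝒜, sq]
  exact div_le_of_le_mul₀ (by positivity) (mul_nonneg layerDensity_nonneg layerDensity_nonneg)
    (card_disjPairs_le h𝒜 h𝒜 hs hs)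

variable {ι : Type*} [Fintype ι] {b : ι → Finset α}

theorem expect_hitCount_sq_le (hb : ∀ i, b i ∈ V.powersetCard m)
    (hd : Pairwise (Function.onFun Disjoint b)) (h𝒜 : 𝒜 ⊆ V.powersetCard m)
    (hs : ShiftedOn V 𝒜) :
    𝔼 σ : Perm V, (hitCount 𝒜 b σ : ℝ) ^ 2 ≤
      (layerDensity V m 𝒜 * Fintype.card ι) ^ 2 + layerDensity V m 𝒜 * Fintype.card ι := by
  classical
  have hpair (i j : ι) : 𝔼 σ : Perm V,
      (if ofSubtype σ • b i ∈ 𝒜 ∧ ofSubtype σ • b j ∈ 𝒜 then 1 else 0 : ℝ) ≤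
        layerDensity V m 𝒜 ^ 2 + if i = j then layerDensity V m 𝒜 else 0 := by
    by_cases hij : i = j
    · subst hij
      simp only [and_self, if_true, expect_ite_smul_mem (hb i) h𝒜]
      exact le_add_of_nonneg_left (sq_nonneg _)
    · rw [if_neg hij, add_zero]
      exact expect_ite_smul_mem_and_le (hb i) (hb j) (hd hij) h𝒜 hs
  calc 𝔼 σ : Perm V, (hitCount 𝒜 b σ : ℝ) ^ 2 = ∑ i, ∑ j, 𝔼 σ : Perm V,
        (if ofSubtype σ • b i ∈ 𝒜 ∧ ofSubtype σ • b j ∈ 𝒜 then 1 else 0 : ℝ) := by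
        simp only [natCast_hitCount, sq, sum_mul_sum, ite_zero_mul_ite_zero, mul_one]
        rw [expect_sum_comm]
        exact sum_congr rfl fun i _ ↦ expect_sum_comm _ _ _
    _ ≤ ∑ i, ∑ j, (layerDensity V m 𝒜 ^ 2 + if i = j then layerDensity V m 𝒜 else 0) :=
        sum_le_sum fun i _ ↦ sum_le_sum fun j _ ↦ hpair i j
    _ = (layerDensity V m 𝒜 * Fintype.card ι) ^ 2 + layerDensity V m 𝒜 * Fintype.card ι := by
        simp only [sum_add_distrib, sum_ite_eq, mem_univ, if_true, sum_const, card_univ,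
          nsmul_eq_mul]
        ring

theorem expect_hitCount_sub_sq_le (hb : ∀ i, b i ∈ V.powersetCard m)
    (hd : Pairwise (Function.onFun Disjoint b)) (h𝒜 : 𝒜 ⊆ V.powersetCard m)
    (hs : ShiftedOn V 𝒜) :
    𝔼 σ : Perm V, ((hitCount 𝒜 b σ : ℝ) - layerDensity V m 𝒜 * Fintype.card ι) ^ 2 ≤
      layerDensity V m 𝒜 * Fintype.card ι := by
  have hsq := expect_hitCount_sq_le hb hd h𝒜 hs
  have hmean := expect_hitCount hb h𝒜
  set μ := layerDensity V m 𝒜 * Fintype.card ι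
  calc 𝔼 σ : Perm V, ((hitCount 𝒜 b σ : ℝ) - μ) ^ 2
      = 𝔼 σ : Perm V, ((hitCount 𝒜 b σ : ℝ) ^ 2 - hitCount 𝒜 b σ * (2 * μ) + μ ^ 2) :=
        expect_congr rfl fun σ _ ↦ by ring
    _ = 𝔼 σ : Perm V, (hitCount 𝒜 b σ : ℝ) ^ 2 - μ ^ 2 := by
        rw [expect_add_distrib, expect_sub_distrib, ← expect_mul, hmean, Fintype.expect_const]
        ring
    _ ≤ μ := by linarith

theorem exists_forall_mul_le_of_expect_sub_sq_le {Ω κ : Type*} [Fintype Ω] [Nonempty Ω] [Fintype κ]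
    {X : κ → Ω → ℝ} {p : κ → ℝ} {η : ℝ} (hη : 0 < η) (hX : ∀ a, 𝔼 ω, (X a ω - p a) ^ 2 ≤ p a)
    (hp : ∀ a, Fintype.card κ < η ^ 2 * p a) : ∃ ω, ∀ a, (1 - η) * p a ≤ X a ω := by
  have hp0 (a : κ) : 0 < p a :=
    pos_of_mul_pos_right ((Nat.cast_nonneg _).trans_lt (hp a)) (sq_nonneg η)
  by_contra! hcon
  obtain ⟨a₀, -⟩ := hcon (Classical.arbitrary Ω)
  have hκ : (0 : ℝ) < Fintype.card κ := Nat.cast_pos.2 (Fintype.card_pos_iff.2 ⟨a₀⟩)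
  have hone (ω : Ω) : 1 ≤ ∑ a, (X a ω - p a) ^ 2 / (η * p a) ^ 2 := by
    obtain ⟨a, ha⟩ := hcon ω
    refine le_trans ?_ (single_le_sum (fun c _ ↦ by positivity) (mem_univ a))
    have hηp : 0 < η * p a := mul_pos hη (hp0 a)
    rw [one_le_div (pow_pos hηp 2)]
    nlinarith
  have hsmall (a : κ) : 𝔼 ω, (X a ω - p a) ^ 2 / (η * p a) ^ 2 < 1 / Fintype.card κ := by
    calc 𝔼 ω, (X a ω - p a) ^ 2 / (η * p a) ^ 2 ≤ p a / (η * p a) ^ 2 := by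
          rw [← expect_div]
          exact div_le_div_of_nonneg_right (hX a) (sq_nonneg _)
      _ = 1 / (η ^ 2 * p a) := by
          have := (hp0 a).ne'
          field_simp
      _ < 1 / Fintype.card κ := one_div_lt_one_div_of_lt hκ (hp a)
  have hlt : ∑ a, 𝔼 ω, (X a ω - p a) ^ 2 / (η * p a) ^ 2 < 1 :=
    calc _ < ∑ _a : κ, 1 / (Fintype.card κ : ℝ) :=
          sum_lt_sum_of_nonempty ⟨a₀, mem_univ a₀⟩ fun a _ ↦ hsmall a
      _ = 1 := by rw [sum_const, card_univ, nsmul_eq_mul, mul_one_div_cancel hκ.ne']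
  rw [← expect_sum_comm] at hlt
  exact hlt.not_ge (le_expect univ_nonempty fun ω _ ↦ hone ω)

end Concentration

section Blocks

theorem exists_pairwise_disjoint_card_eq {α ι : Type*} [Fintype ι] (V : Finset α)
    (c : ι → ℕ) (hc : ∑ i, c i ≤ #V) : ∃ S : ι → Finset α, (∀ i, S i ∈ V.powersetCard (c i)) ∧
      Pairwise (Function.onFun Disjoint S) := by
  obtain ⟨e⟩ : Nonempty ((Σ i, Fin (c i)) ↪ V) :=
    Function.Embedding.nonempty_of_card_le (by simpa using hc)
  refine ⟨fun i ↦ univ.map ((Function.Embedding.sigmaMk i).trans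
    (e.trans (Function.Embedding.subtype _))), fun i ↦ mem_powersetCard.2 ⟨?_, by simp⟩,
    fun i j hij ↦ ?_⟩
  · exact fun x hx ↦ by
      obtain ⟨y, -, rfl⟩ := mem_map.1 hx
      exact (e _).2
  · refine disjoint_left.2 fun x hx hx' ↦ hij ?_
    obtain ⟨y, -, rfl⟩ := mem_map.1 hx
    obtain ⟨z, -, hz⟩ := mem_map.1 hx'
    exact congrArg Sigma.fst (e.injective (Subtype.ext hz)).symm

end Blocks

section Link

/-- The link of `S` in `F`, restricted to the sets `E ⊆ V` of size `m`. -/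
def link {α : Type*} [DecidableEq α] (F : Finset (Finset α)) (V : Finset α) (m : ℕ)
    (S : Finset α) : Finset (Finset α) :=
  {E ∈ V.powersetCard m | S ∪ E ∈ F}

/-- The common link in `F` of all `c`-element subsets of `U`, restricted to the sets `E ⊆ V` of
size `m`. -/
def coreLink {α : Type*} [DecidableEq α] (F : Finset (Finset α)) (U V : Finset α) (m c : ℕ) :
    Finset (Finset α) :=
  {E ∈ V.powersetCard m | ∀ S ∈ U.powersetCard c, S ∪ E ∈ F}

section Counting

theorem card_add_card_filter_le {α : Type*} {A B : Finset α} (hAB : A ⊆ B) (p : α → Prop)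
    [DecidablePred p] : #A + #(B.filter p) ≤ #B + #(A.filter p) := by
  have := card_le_card (filter_subset_filter (fun a ↦ ¬ p a) hAB)
  have := card_filter_add_card_filter_not (s := A) p
  have := card_filter_add_card_filter_not (s := B) p
  omega

variable {α : Type*} [DecidableEq α] {F : Finset (Finset α)} {U V S E : Finset α} {c m t : ℕ}

theorem mem_link : E ∈ link F V m S ↔ E ∈ V.powersetCard m ∧ S ∪ E ∈ F :=
  mem_filter

theorem mem_coreLink : E ∈ coreLink F U V m c ↔
    E ∈ V.powersetCard m ∧ ∀ S ∈ U.powersetCard c, S ∪ E ∈ F :=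
  mem_filter

theorem link_subset_powersetCard : link F V m S ⊆ V.powersetCard m :=
  filter_subset _ _

theorem coreLink_subset_powersetCard : coreLink F U V m c ⊆ V.powersetCard m :=
  filter_subset _ _

theorem coreLink_zero : coreLink F U V m 0 = link F V m ∅ := by
  simp only [coreLink, link, powersetCard_zero, mem_singleton, forall_eq]

theorem coreLink_subset_link (hS : S ∈ U.powersetCard c) :
    coreLink F U V m c ⊆ link F V m S := fun _ hE ↦
  mem_link.2 ⟨(mem_coreLink.1 hE).1, (mem_coreLink.1 hE).2 S hS⟩

theorem card_filter_inter_eq (hUV : Disjoint U V) (hF : F ⊆ (U ∪ V).powersetCard (#S + m))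
    (hS : S ⊆ U) : #{A ∈ F | A ∩ U = S} = #(link F V m S) := by
  refine card_nbij' (· \ U) (S ∪ ·) (fun A hA ↦ ?_) (fun E hE ↦ ?_) (fun A hA ↦ ?_)
    fun E hE ↦ ?_
  · obtain ⟨hAF, rfl⟩ := mem_filter.1 (mem_coe.1 hA)
    obtain ⟨hAUV, hAk⟩ := mem_powersetCard.1 (hF hAF)
    refine mem_coe.2 (mem_link.2 ⟨mem_powersetCard.2 ⟨?_, ?_⟩, ?_⟩)
    · exact sdiff_le_iff.2 hAUV
    · have := card_inter_add_card_sdiff A U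
      simp only
      omega
    · rwa [union_comm, sdiff_union_inter]
  · obtain ⟨hE, hSE⟩ := mem_link.1 (mem_coe.1 hE)
    refine mem_coe.2 (mem_filter.2 ⟨hSE, ?_⟩)
    rw [union_inter_distrib_right, inter_eq_left.2 hS,
      disjoint_iff_inter_eq_empty.1 (hUV.symm.mono_left (mem_powersetCard.1 hE).1), union_empty]
  · obtain ⟨-, rfl⟩ := mem_filter.1 (mem_coe.1 hA)
    exact (union_comm _ _).trans (sdiff_union_inter A U)
  · obtain ⟨hE, -⟩ := mem_link.1 (mem_coe.1 hE)
    simp only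
    rw [union_sdiff_distrib, sdiff_eq_empty_iff_subset.2 hS, empty_union]
    exact sdiff_eq_self_of_disjoint (hUV.symm.mono_left (mem_powersetCard.1 hE).1)

theorem card_filter_card_inter_eq (hUV : Disjoint U V) (hF : F ⊆ (U ∪ V).powersetCard (c + m)) :
    #{A ∈ F | #(A ∩ U) = c} = ∑ S ∈ U.powersetCard c, #(link F V m S) := by
  rw [card_eq_sum_card_fiberwise (f := (· ∩ U)) (t := U.powersetCard c) fun A hA ↦
    mem_coe.2 (mem_powersetCard.2 ⟨inter_subset_right, (mem_filter.1 (mem_coe.1 hA)).2⟩)]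
  refine sum_congr rfl fun S hS ↦ ?_
  obtain ⟨hSU, rfl⟩ := mem_powersetCard.1 hS
  rw [← card_filter_inter_eq hUV hF hSU, filter_filter]
  exact congrArg card (filter_congr fun A _ ↦ and_iff_right_of_imp fun h ↦ h ▸ rfl)

theorem card_filter_card_inter_le_one (hUV : Disjoint U V)
    (hF : F ⊆ (U ∪ V).powersetCard (m + 1)) : #{A ∈ F | #(A ∩ U) ≤ 1} =
      #(link F V (m + 1) ∅) + ∑ i ∈ U, #(link F V m {i}) := by
  have h0 := card_filter_card_inter_eq (c := 0) hUV (hF.trans_eq (by rw [zero_add]))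
  have h1 := card_filter_card_inter_eq (c := 1) hUV (hF.trans_eq (by rw [add_comm]))
  rw [powersetCard_zero, sum_singleton] at h0
  simp only [powersetCard_one, sum_map, Function.Embedding.coeFn_mk] at h1
  rw [← h0, ← h1, ← card_union_of_disjoint, ← filter_or]
  · exact congrArg card (filter_congr fun A _ ↦ Nat.le_one_iff_eq_zero_or_eq_one)
  · exact disjoint_filter.2 fun A _ h h' ↦ by omega

theorem card_add_choose_le (hUV : Disjoint U V) (hF : F ⊆ (U ∪ V).powersetCard (m + 1)) :
    #F + ((#V).choose (m + 1) + #U * (#V).choose m) ≤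
      (#U + #V).choose (m + 1) + (#(link F V (m + 1) ∅) + ∑ i ∈ U, #(link F V m {i})) := by
  have hfull {S : Finset α} {l : ℕ} (hSU : S ⊆ U) (hl : #S + l = m + 1) :
      link ((U ∪ V).powersetCard (m + 1)) V l S = V.powersetCard l := by
    refine filter_true_of_mem fun E hE ↦ ?_
    obtain ⟨hEV, hEl⟩ := mem_powersetCard.1 hE
    refine mem_powersetCard.2 ⟨union_subset_union hSU hEV, ?_⟩
    rw [card_union_of_disjoint (hUV.mono hSU hEV), hEl, hl]
  have h := card_add_card_filter_le hF fun A ↦ #(A ∩ U) ≤ 1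
  rw [card_filter_card_inter_le_one hUV hF, card_filter_card_inter_le_one hUV subset_rfl,
    hfull (empty_subset U) (zero_add _), card_powersetCard, card_powersetCard,
    card_union_of_disjoint hUV] at h
  rwa [sum_congr rfl fun i hi ↦ congrArg card (hfull (singleton_subset_iff.2 hi) (by
    rw [card_singleton, add_comm])), sum_const, smul_eq_mul, card_powersetCard] at h

theorem hasMatching_of_mem_coreLink (hUV : Disjoint U V) {E : Fin t → Finset α}
    {c m : Fin t → ℕ} (hE : ∀ p, E p ∈ coreLink F U V (m p) (c p))
    (hd : Pairwise (Function.onFun Disjoint E)) (hc : ∑ p, c p ≤ #U) : HasMatching F t := by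
  obtain ⟨S, hS, hSd⟩ := exists_pairwise_disjoint_card_eq U c hc
  have hSU (p) : S p ⊆ U := (mem_powersetCard.1 (hS p)).1
  have hEV (p) : E p ⊆ V := (mem_powersetCard.1 (coreLink_subset_powersetCard (hE p))).1
  refine ⟨fun p ↦ S p ∪ E p, fun p ↦ (mem_coreLink.1 (hE p)).2 _ (hS p), fun p q hpq ↦ ?_⟩
  exact disjoint_union_left.2
    ⟨disjoint_union_right.2 ⟨hSd hpq, hUV.mono (hSU p) (hEV q)⟩,
      disjoint_union_right.2 ⟨(hUV.mono (hSU q) (hEV p)).symm, hd hpq⟩⟩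

end Counting

section Shifted

variable {α : Type*} [LinearOrder α] {F : Finset (Finset α)} {U V S E : Finset α} {c m : ℕ}
  {i j x : α}

theorem ShiftedOn.shiftedOn_link (h : ShiftedOn .univ F) (hS : Disjoint S V) :
    ShiftedOn V (link F V m S) := fun E hE i hi j hj hij hiE ↦ by
  obtain ⟨hE, hSE⟩ := mem_link.1 hE
  have hjV : j ∈ V := (mem_powersetCard.1 hE).1 hj
  have hiS := disjoint_right.1 hS hi
  have hjS := disjoint_right.1 hS hjV
  refine mem_link.2 ⟨insert_erase_mem_powersetCard hE hi hj hiE, ?_⟩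
  convert h _ hSE i trivial j (mem_union_right S hj) hij (by grind) using 1
  grind

theorem ShiftedOn.shiftedOn_coreLink (h : ShiftedOn .univ F) (hUV : Disjoint U V) :
    ShiftedOn V (coreLink F U V m c) := fun E hE i hi j hj hij hiE ↦ by
  refine mem_coreLink.2 ⟨insert_erase_mem_powersetCard (mem_coreLink.1 hE).1 hi hj hiE,
    fun S hS ↦ ?_⟩
  exact (mem_link.1 (h.shiftedOn_link (hUV.mono_left (mem_powersetCard.1 hS).1) E
    (coreLink_subset_link hS hE) i hi j hj hij hiE)).2

theorem ShiftedOn.link_singleton_subset (h : ShiftedOn .univ F) (hij : i ≤ j) (hi : i ∉ V)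
    (hj : j ∉ V) : link F V m {j} ⊆ link F V m {i} := fun E hE ↦ by
  obtain rfl | hij := hij.eq_or_lt
  · exact hE
  obtain ⟨hE, hjE⟩ := mem_link.1 hE
  have hEV := (mem_powersetCard.1 hE).1
  refine mem_link.2 ⟨hE, ?_⟩
  convert h _ hjE i trivial j (by simp) hij (by grind) using 1
  grind

theorem ShiftedOn.erase_mem_coreLink (h : ShiftedOn .univ F) (hUV : ∀ u ∈ U, ∀ v ∈ V, u < v)
    (hE : E ∈ coreLink F U V (m + 1) c) (hx : x ∈ E) :
    E.erase x ∈ coreLink F U V m (c + 1) := by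
  obtain ⟨hE, hF⟩ := mem_coreLink.1 hE
  obtain ⟨hEV, hEm⟩ := mem_powersetCard.1 hE
  refine mem_coreLink.2 ⟨mem_powersetCard.2 ⟨(erase_subset x E).trans hEV, ?_⟩, fun S hS ↦ ?_⟩
  · rw [card_erase_of_mem hx, hEm, Nat.add_sub_cancel]
  obtain ⟨hSU, hSc⟩ := mem_powersetCard.1 hS
  obtain ⟨y, hy⟩ : S.Nonempty := card_pos.1 (by omega)
  have hyE : ∀ v ∈ E, y < v := fun v hv ↦ hUV y (hSU hy) v (hEV hv)
  have hyE' : y ∉ E := fun hy' ↦ (hyE y hy').false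
  have hSy : S.erase y ∈ U.powersetCard c :=
    mem_powersetCard.2 ⟨(erase_subset y S).trans hSU, by rw [card_erase_of_mem hy]; omega⟩
  convert h _ (hF _ hSy) y trivial x (mem_union_right _ hx) (hyE x hx) ?_ using 1 <;> grind

theorem ShiftedOn.shadow_coreLink_subset (h : ShiftedOn .univ F)
    (hUV : ∀ u ∈ U, ∀ v ∈ V, u < v) :
    ∂ (coreLink F U V (m + 1) c) ⊆ coreLink F U V m (c + 1) := fun E' hE' ↦ by
  obtain ⟨E, hE, x, hx, rfl⟩ := mem_shadow_iff.1 hE'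
  exact h.erase_mem_coreLink hUV hE hx

end Shifted

section CoreBounds

variable {F : Finset (Finset ℕ)} {m n s : ℕ}

theorem lt_of_mem_range_of_mem_Ico : ∀ u ∈ range s, ∀ v ∈ Ico s n, u < v := fun _ hu _ hv ↦
  (mem_range.1 hu).trans_le (mem_Ico.1 hv).1

theorem disjoint_range_Ico : Disjoint (range s) (Ico s n) :=
  disjoint_left.2 fun x hx hx' ↦ (lt_of_mem_range_of_mem_Ico x hx x hx').false

theorem inter_Ico_eq_filter_lt {E : Finset ℕ} (hE : E ⊆ Ico s n) (x : ℕ) :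
    E ∩ Ico s x = {y ∈ E | y < x} := by
  ext y
  have := fun hy : y ∈ E ↦ mem_Ico.1 (hE hy)
  grind

theorem ShiftedOn.card_coreLink_zero_le (h : ShiftedOn .univ F)
    (hF : ¬ HasMatching F (s + 1)) :
    (#(coreLink F (range (s + 1)) (Ico (s + 1) n) (m + 1) 0) : ℝ) ≤
      m / (m + 1) * s * #(coreLink F (range (s + 1)) (Ico (s + 1) n) m 1) := by
  refine (card_le_mul_card_shadow (c := m / (m + 1) * s) (l := m + 1)
    (T := fun i ↦ Ico (s + 1) (i * (s + 1) - 1)) (by positivity) (fun i j hij ↦ ?_)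
    (fun E hE ↦ ?_) fun i hi ↦ ?_).trans ?_
  · exact Ico_subset_Ico_right (Nat.sub_le_sub_right (Nat.mul_le_mul_right _ hij) 1)
  · rw [coreLink_zero, mem_link, empty_union, mem_powersetCard] at hE
    obtain ⟨⟨hEV, hEm⟩, hEF⟩ := hE
    simp only [inter_Ico_eq_filter_lt hEV]
    exact ⟨hEm.le, hEm ▸ h.exists_le_card_filter_lt hF hEF⟩
  · obtain ⟨i, rfl⟩ := Nat.exists_eq_add_of_le' (mem_Icc.1 hi).1
    have him : (i : ℝ) ≤ m := mod_cast Nat.le_of_succ_le_succ (mem_Icc.1 hi).2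
    have hcard : #(Ico (s + 1) ((i + 1) * (s + 1) - 1)) ≤ i * s + i := by
      rw [Nat.card_Ico, add_mul, mul_add]
      omega
    have hslope : (i : ℝ) ≤ m / (m + 1) * (i + 1) := by
      rw [div_mul_eq_mul_div, le_div_iff₀ (by positivity)]
      linarith
    calc (#(Ico (s + 1) ((i + 1) * (s + 1) - 1)) : ℝ) ≤ i * s + i := mod_cast hcard
      _ ≤ m / (m + 1) * (i + 1) * s + i := by gcongr
      _ = m / (m + 1) * s * (i + 1 : ℕ) + ((i + 1 : ℕ) - 1) := by
          push_cast
          ring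
  · exact mul_le_mul_of_nonneg_left (mod_cast card_le_card
      (h.shadow_coreLink_subset lt_of_mem_range_of_mem_Ico)) (by positivity)

theorem ShiftedOn.card_coreLink_one_le (h : ShiftedOn .univ F) (hF : ¬ HasMatching F (s + 1)) :
    (#(coreLink F (range (s + 1)) (Ico (s + 1) n) (m + 1) 1) : ℝ) ≤
      s * #(coreLink F (range (s + 1)) (Ico (s + 1) n) m 2) := by
  refine (card_le_mul_card_shadow (l := m + 1)
    (T := fun i ↦ Ico (s + 1) ((i + 1) * (s + 1) - 1))
    (Nat.cast_nonneg s) (fun i j hij ↦ ?_) (fun E hE ↦ ?_) fun i hi ↦ ?_).trans ?_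
  · exact Ico_subset_Ico_right
      (Nat.sub_le_sub_right (Nat.mul_le_mul_right _ (Nat.succ_le_succ hij)) 1)
  · obtain ⟨hE, hEF⟩ := mem_coreLink.1 hE
    obtain ⟨hEV, hEm⟩ := mem_powersetCard.1 hE
    refine ⟨hEm.le, ?_⟩
    obtain ⟨i, hi, hcount⟩ := h.exists_le_card_filter_lt hF (hEF {s} (by simp))
    have hcard : #({s} ∪ E) ≤ m + 2 := by
      have := card_union_le {s} E
      rw [card_singleton] at this
      omega
    obtain ⟨i, rfl⟩ := Nat.exists_eq_add_of_le' (mem_Icc.1 hi).1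
    rw [filter_union, filter_singleton, ← inter_Ico_eq_filter_lt hEV] at hcount
    obtain rfl | hi0 := i.eq_zero_or_pos
    · simp at hcount
    · have hs : #(if s < (i + 1) * (s + 1) - 1 then {s} else ∅) ≤ 1 := by
        split_ifs
        exacts [(card_singleton s).le, Nat.zero_le 1]
      have := hcount.trans (card_union_le _ _)
      exact ⟨i, mem_Icc.2 ⟨hi0, by grind⟩, by omega⟩
  · have hi1 := (mem_Icc.1 hi).1
    have hcard : #(Ico (s + 1) ((i + 1) * (s + 1) - 1)) + 1 ≤ s * i + i := by
      rw [Nat.card_Ico, add_mul, mul_add, mul_comm s]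
      omega
    have : ((#(Ico (s + 1) ((i + 1) * (s + 1) - 1)) : ℕ) : ℝ) + 1 ≤ s * i + i := mod_cast hcard
    linarith
  · exact mul_le_mul_of_nonneg_left (mod_cast card_le_card
      (h.shadow_coreLink_subset lt_of_mem_range_of_mem_Ico)) (Nat.cast_nonneg s)

end CoreBounds
end Link

section LinkDensities

open Equiv.Perm (ofSubtype)
open scoped BigOperators Pointwise

variable {F : Finset (Finset ℕ)} {V : Finset ℕ} {m s : ℕ} {ι : Type*} [Fintype ι]
  {b : ι → Finset ℕ}

theorem exists_card_filter_mem_link_add_le (hF : ¬ HasMatching F (s + 1))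
    (hV : Disjoint (range (s + 1)) V) (hb : Pairwise (Function.onFun Disjoint b)) :
    ∃ i ≤ s, #{r | b r ∈ link F V m {i}} + i ≤ s := by
  classical
  by_contra! hcon
  have hhall (I : Finset (Fin (s + 1))) :
      #I ≤ #(I.biUnion fun i ↦ {r | b r ∈ link F V m {(i : ℕ)}}) := by
    obtain rfl | hI := I.eq_empty_or_nonempty
    · exact (card_empty).trans_le (Nat.zero_le _)
    have hcard : #I ≤ #(Ici (I.min' hI)) := card_le_card fun i hi ↦ mem_Ici.2 (min'_le I i hi)
    rw [Fin.card_Ici] at hcard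
    have hmin := card_le_card (subset_biUnion_of_mem
      (fun i : Fin (s + 1) ↦ ({r | b r ∈ link F V m {(i : ℕ)}} : Finset ι)) (min'_mem I hI))
    have := hcon (I.min' hI) (I.min' hI).is_le
    omega
  obtain ⟨f, hf, hfb⟩ := (all_card_le_biUnion_card_iff_exists_injective _).1 hhall
  have hlink (i : Fin (s + 1)) : b (f i) ∈ link F V m {(i : ℕ)} := (mem_filter.1 (hfb i)).2
  have hsub (i : Fin (s + 1)) : {(i : ℕ)} ⊆ range (s + 1) :=
    singleton_subset_iff.2 (mem_range.2 i.isLt)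
  have hbV (i : Fin (s + 1)) : b (f i) ⊆ V :=
    (mem_powersetCard.1 (link_subset_powersetCard (hlink i))).1
  refine hF ⟨fun i ↦ {(i : ℕ)} ∪ b (f i), fun i ↦ (mem_link.1 (hlink i)).2, fun i j hij ↦ ?_⟩
  exact disjoint_union_left.2
    ⟨disjoint_union_right.2
      ⟨disjoint_singleton.2 (Fin.val_injective.ne hij), hV.mono (hsub i) (hbV j)⟩,
    disjoint_union_right.2 ⟨(hV.mono (hsub j) (hbV i)).symm, hb (hf.ne hij)⟩⟩

theorem ShiftedOn.exists_sum_hitCount_link_le (h : ShiftedOn .univ F)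
    (hF : ¬ HasMatching F (s + 1)) (hV : Disjoint (range (s + 1)) V)
    (hb : Pairwise (Function.onFun Disjoint b)) (σ : Perm V) :
    ∃ j ≤ s, hitCount (coreLink F (range (s + 1)) V m 1) b σ ≤ j ∧
      ∑ i ∈ range (s + 1), hitCount (link F V m {i}) b σ ≤
        (s - j) * Fintype.card ι + (j + 1) * j := by
  obtain ⟨i₀, hi₀, hcard⟩ := exists_card_filter_mem_link_add_le (m := m) hF hV
    (b := fun r ↦ ofSubtype σ • b r) fun r r' hr ↦
      (disjoint_image (MulAction.injective (ofSubtype σ))).2 (hb hr)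
  have hhit : hitCount (link F V m {i₀}) b σ ≤ s - i₀ := Nat.le_sub_of_add_le hcard
  refine ⟨s - i₀, Nat.sub_le s i₀, (hitCount_mono (coreLink_subset_link ?_) σ).trans hhit, ?_⟩
  · simpa [mem_powersetCard, Nat.lt_succ_iff] using hi₀
  have hnot {i : ℕ} (hi : i ≤ s) : i ∉ V := disjoint_left.1 hV (mem_range.2 (by omega))
  calc ∑ i ∈ range (s + 1), hitCount (link F V m {i}) b σ
      = ∑ i ∈ range i₀, hitCount (link F V m {i}) b σ +
          ∑ i ∈ range (s - i₀ + 1), hitCount (link F V m {i₀ + i}) b σ := by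
        rw [← sum_range_add, ← add_assoc, Nat.add_sub_cancel' hi₀]
    _ ≤ i₀ * Fintype.card ι + (s - i₀ + 1) * (s - i₀) := by
        refine add_le_add ((sum_le_card_nsmul _ _ _ fun i _ ↦ card_le_univ _).trans ?_)
          ((sum_le_card_nsmul _ _ (s - i₀) fun i hi ↦
            (hitCount_mono (h.link_singleton_subset (Nat.le_add_right i₀ i) (hnot hi₀)
              (hnot ?_)) σ).trans hhit).trans ?_)
        · rw [card_range, smul_eq_mul]
        · have := mem_range.1 hi
          omega
        · rw [card_range, smul_eq_mul]
    _ = _ := by rw [Nat.sub_sub_self hi₀]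

theorem ShiftedOn.layerDensity_coreLink_one_mul_le (h : ShiftedOn .univ F)
    (hF : ¬ HasMatching F (s + 1)) (hV : Disjoint (range (s + 1)) V) {t : ℕ}
    (ht : t * m ≤ #V) :
    layerDensity V m (coreLink F (range (s + 1)) V m 1) * t ≤ s := by
  obtain ⟨b, hb, hd⟩ := exists_pairwise_disjoint_card_eq V (fun _ : Fin t ↦ m) (by simpa using ht)
  rw [← Fintype.card_fin t, ← expect_hitCount hb coreLink_subset_powersetCard]
  refine expect_le univ_nonempty fun σ _ ↦ ?_
  obtain ⟨j, hj, hhit, -⟩ := h.exists_sum_hitCount_link_le (m := m) hF hV hd σ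
  exact mod_cast hhit.trans hj

section RealInequalities

variable {γ e s t c p X j : ℝ}

theorem hall_bound_add_mul_le_of_le (he : 0 < e) (hX : 0 ≤ X) (hXj : X ≤ j) (hj : j ≤ s)
    (hc : 0 ≤ c) (hcs : c ≤ s) (hps : p ≤ s) (hcp : c * p ≤ (γ - 1 - e) * s ^ 2)
    (ht : γ * s - 2 ≤ t) (hes : 12 ≤ e * s) (hs : 0 < s) (hXp : X ≤ p + e / 4 * s) :
    (s - j) * t + (j + 1) * j + c * X ≤ s * t - e / 2 * s * X := by
  have hcp' : c + p ≤ (γ - e) * s := by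
    have := mul_nonneg (sub_nonneg.2 hcs) (sub_nonneg.2 hps)
    exact le_of_mul_le_mul_left (by linarith : s * (c + p) ≤ s * ((γ - e) * s)) hs
  -- The left-hand side is convex in `j`, so only the endpoints `j = X` and `j = s` matter.
  have hleft : X * (X + 1 - t) + c * X ≤ -(e / 2 * s * X) := by
    have : X + c + 1 - t ≤ -(e / 2 * s) := by linarith
    nlinarith
  have hright : s * (s + 1 - t) + c * X ≤ -(e / 2 * s * X) := by
    have hcX : c * X ≤ c * p + s * (e / 4 * s) := by
      have := mul_le_mul_of_nonneg_left hXp hc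
      have := mul_le_mul_of_nonneg_right hcs (by positivity : 0 ≤ e / 4 * s)
      linarith
    have hst : s * (s + 1 - t) ≤ s * (s + 3 - γ * s) :=
      mul_le_mul_of_nonneg_left (by linarith) hs.le
    have hXs : e / 2 * s * X ≤ e / 2 * s * s := by gcongr; exact hXj.trans hj
    have hes' : 12 * s ≤ e * s * s := by gcongr
    linarith
  have hconv : j * (j + 1 - t) ≤ (X + s + 1 - t) * j - X * s := by
    linarith [mul_nonneg (sub_nonneg.2 hXj) (sub_nonneg.2 hj)]
  obtain hslope | hslope := le_total 0 (X + s + 1 - t)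
  · linarith [mul_le_mul_of_nonneg_left hj hslope]
  · linarith [mul_le_mul_of_nonpos_left hXj hslope]

theorem hall_bound_add_mul_le_of_ge (he : 0 < e) (hX : 0 ≤ X) (hXj : X ≤ j) (hj : j ≤ s)
    (hcs : c ≤ s) (ht : s + 1 ≤ t) (hs : 0 < s) (hXp : p + e / 4 * s ≤ X) :
    (s - j) * t + (j + 1) * j + c * X ≤
      s * t - e / 2 * s * X + (16 + 8 * e) / e ^ 2 * (X - p) ^ 2 := by
  have hdev : (1 + e / 2) * s ^ 2 ≤ (16 + 8 * e) / e ^ 2 * (X - p) ^ 2 :=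
    calc (1 + e / 2) * s ^ 2 = (16 + 8 * e) / e ^ 2 * (e / 4 * s) ^ 2 := by field_simp; ring
      _ ≤ _ := by gcongr; linarith
  have hjt : j * (j + 1 - t) ≤ 0 :=
    mul_nonpos_of_nonneg_of_nonpos (hX.trans hXj) (by linarith)
  have hcX : c * X ≤ s * s := mul_le_mul hcs (hXj.trans hj) hX hs.le
  have hXs : e / 2 * s * X ≤ e / 2 * s * s := by gcongr; exact hXj.trans hj
  linarith

theorem hall_bound_add_mul_le (he : 0 < e) (hX : 0 ≤ X) (hXj : X ≤ j) (hj : j ≤ s) (hc : 0 ≤ c)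
    (hcs : c ≤ s) (hps : p ≤ s) (hcp : c * p ≤ (γ - 1 - e) * s ^ 2) (ht : γ * s - 2 ≤ t)
    (hes : 12 ≤ e * s) (hγs : 3 ≤ (γ - 1) * s) (hs : 0 < s) :
    (s - j) * t + (j + 1) * j + c * X ≤
      s * t - e / 2 * s * X + (16 + 8 * e) / e ^ 2 * (X - p) ^ 2 := by
  obtain hXp | hXp := le_total X (p + e / 4 * s)
  · have := hall_bound_add_mul_le_of_le he hX hXj hj hc hcs hps hcp ht hes hs hXp
    have : 0 ≤ (16 + 8 * e) / e ^ 2 * (X - p) ^ 2 := by positivity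
    linarith
  · exact hall_bound_add_mul_le_of_ge he hX hXj hj hcs (by linarith) hs hXp

end RealInequalities

theorem ShiftedOn.sum_layerDensity_link_add_le (h : ShiftedOn .univ F)
    (hF : ¬ HasMatching F (s + 1)) (hV : Disjoint (range (s + 1)) V) {t : ℕ}
    (htm : t * m ≤ #V) {γ e w : ℝ} (he : 0 < e) (hes : 12 ≤ e * s)
    (hes' : 2 * ((16 + 8 * e) / e ^ 2) ≤ e * s) (hγs : 3 ≤ (γ - 1) * s) (ht : γ * s - 2 ≤ t)
    (hw : 0 ≤ w) (hws : w ≤ s * layerDensity V m (coreLink F (range (s + 1)) V m 1))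
    (hwt : w * t ≤ (γ - 1 - e) * s ^ 2) :
    ∑ i ∈ range (s + 1), layerDensity V m (link F V m {i}) + w ≤ s := by
  obtain ⟨b, hb, hd⟩ := exists_pairwise_disjoint_card_eq V (fun _ : Fin t ↦ m) (by simpa using htm)
  have hs : (0 : ℝ) < s := pos_of_mul_pos_right (by linarith) he.le
  have ht0 : (0 : ℝ) < t := by linarith
  have hps := h.layerDensity_coreLink_one_mul_le hF hV htm
  have hmean := expect_hitCount hb
    (coreLink_subset_powersetCard (F := F) (U := range (s + 1)) (V := V) (c := 1))
  have hvar := expect_hitCount_sub_sq_le hb hd coreLink_subset_powersetCard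
    (h.shiftedOn_coreLink hV (m := m) (c := 1))
  set K := coreLink F (range (s + 1)) V m 1
  set δ := layerDensity V m K
  have hδ : 0 ≤ δ := layerDensity_nonneg
  rw [Fintype.card_fin] at hmean hvar
  have hwδ : w / δ * δ = w := div_mul_cancel_of_imp fun hδ0 ↦ by
    rw [hδ0, mul_zero] at hws
    exact hws.antisymm hw
  have hpoint (σ : Perm V) : ∑ i ∈ range (s + 1), (hitCount (link F V m {i}) b σ : ℝ) +
      w / δ * hitCount K b σ ≤ s * t - e / 2 * s * hitCount K b σ +
        (16 + 8 * e) / e ^ 2 * (hitCount K b σ - δ * t) ^ 2 := by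
    obtain ⟨j, hj, hhit, hsum⟩ := h.exists_sum_hitCount_link_le (m := m) hF hV hd σ
    rw [Fintype.card_fin] at hsum
    refine (add_le_add_left ?_ _).trans (hall_bound_add_mul_le (γ := γ) (j := j) he
      (Nat.cast_nonneg _) (mod_cast hhit) (mod_cast hj) (by positivity)
      (div_le_of_le_mul₀ hδ hs.le hws) hps (by rwa [← mul_assoc, hwδ]) ht hes hγs hs)
    rw [← Nat.cast_sub hj]
    exact mod_cast hsum
  have hexp := expect_le_expect fun σ (_ : σ ∈ univ) ↦ hpoint σ
  simp only [expect_add_distrib, expect_sub_distrib, ← mul_expect, hmean, expect_sum_comm,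
    Fintype.expect_const] at hexp
  rw [sum_congr rfl fun _ _ ↦ expect_hitCount hb link_subset_powersetCard, ← sum_mul] at hexp
  have := mul_le_mul_of_nonneg_left hvar (by positivity : 0 ≤ (16 + 8 * e) / e ^ 2)
  have := mul_le_mul_of_nonneg_right hes' (by positivity : 0 ≤ δ * t)
  rw [← mul_assoc, hwδ, Fintype.card_fin] at hexp
  exact le_of_mul_le_mul_right (by linarith) ht0

end LinkDensities

section CoreFreeSets

open Equiv.Perm (ofSubtype)
open scoped BigOperators Pointwise

theorem ShiftedOn.mem_coreLink_of_subset {α : Type*} [LinearOrder α] {F : Finset (Finset α)}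
    {U V E E' : Finset α} {c c' m m' : ℕ} (h : ShiftedOn .univ F) (hUV : ∀ u ∈ U, ∀ v ∈ V, u < v)
    (hE : E ∈ coreLink F U V m c) (hsub : E' ⊆ E) (hE' : #E' = m') (hmc : m' + c' = m + c) :
    E' ∈ coreLink F U V m' c' := by
  have hEm := (mem_powersetCard.1 (coreLink_subset_powersetCard hE)).2
  obtain ⟨d, rfl⟩ := Nat.exists_eq_add_of_le (hE' ▸ hEm ▸ card_le_card hsub : m' ≤ m)
  induction d generalizing E c with
  | zero =>
    obtain rfl : c' = c := by omega
    exact (eq_of_subset_of_card_le hsub (by omega)) ▸ hE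
  | succ d ih =>
    obtain ⟨x, hx⟩ : (E \ E').Nonempty := by
      rw [← card_pos, card_sdiff_of_subset hsub]
      omega
    obtain ⟨hxE, hxE'⟩ := mem_sdiff.1 hx
    refine ih (subset_erase.2 ⟨hsub, hxE'⟩) (h.erase_mem_coreLink hUV hE hxE) (by omega) ?_
    rw [card_erase_of_mem hxE]
    omega

theorem exists_subset_card_eq_card_add_card_le {ι : Type*} [DecidableEq ι] {T₀ T₁ T₂ : Finset ι}
    {t : ℕ} (h₁₂ : T₁ ⊆ T₂) (h₀₁ : T₀ ⊆ T₁) (ht : t ≤ #T₂) (hT : t ≤ #T₀ + #T₁) :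
    ∃ T ⊆ T₂, #T = t ∧ #(T \ T₀) + #(T \ T₁) ≤ t := by
  obtain h | h := le_total t #T₁
  · obtain ⟨T, hT₁, rfl⟩ := exists_subset_card_eq h
    refine ⟨T, hT₁.trans h₁₂, rfl, ?_⟩
    rw [sdiff_eq_empty_iff_subset.2 hT₁, card_empty, add_zero]
    exact card_le_card sdiff_subset
  · obtain ⟨T, h₁, h₂, rfl⟩ := exists_subsuperset_card_eq h₁₂ h ht
    refine ⟨T, h₂, rfl, ?_⟩
    rw [card_sdiff_of_subset h₁, card_sdiff_of_subset (h₀₁.trans h₁)]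
    omega

-- A block lying in the core link of order `c` becomes a member of `F` at the cost of `c` elements
-- of `U`. The `#T₀` blocks of cost `0`, the blocks of cost `1` and the remaining ones of cost `2`
-- together fit into the budget `#U`.
theorem card_add_card_lt_of_not_hasMatching {α ι : Type*} [DecidableEq α] {F : Finset (Finset α)}
    {U V : Finset α} (hUV : Disjoint U V) (hF : ¬ HasMatching F #U) {T : Fin 3 → Finset ι}
    (hT : Monotone T) {E : Fin 3 → ι → Finset α} (hE : Antitone E) {m : Fin 3 → ℕ}
    (hmem : ∀ c, ∀ i ∈ T c, E c i ∈ coreLink F U V (m c) c)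
    (hd : Pairwise (Function.onFun Disjoint (E 0))) (hU : #U ≤ #(T 2)) :
    #(T 0) + #(T 1) < #U := by
  classical
  by_contra! hcon
  obtain ⟨S, hS, hSU, hcost⟩ := exists_subset_card_eq_card_add_card_le
    (hT (by decide : (1 : Fin 3) ≤ 2)) (hT (by decide : (0 : Fin 3) ≤ 1)) hU hcon
  let c (i : ι) : Fin 3 := if i ∈ T 0 then 0 else if i ∈ T 1 then 1 else 2
  have hc (i : ι) (hi : i ∈ S) : i ∈ T (c i) := by
    have := hS hi
    grind
  have hcval (i : ι) : (c i : ℕ) = (if i ∉ T 0 then 1 else 0) + if i ∉ T 1 then 1 else 0 := by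
    have := @hT 0 1 (by decide) i
    grind
  let e := (S.equivFinOfCardEq hSU).symm
  refine hF (hasMatching_of_mem_coreLink hUV (E := fun p ↦ E (c (e p)) (e p))
    (c := fun p ↦ c (e p)) (fun p ↦ hmem _ _ (hc _ (e p).2)) (fun p r hpr ↦ ?_) ?_)
  · exact (hd (Subtype.val_injective.ne (e.injective.ne hpr))).mono
      (hE (Fin.zero_le _) _) (hE (Fin.zero_le _) _)
  · rw [e.sum_comp fun i : S ↦ (c i : ℕ), sum_coe_sort S fun i ↦ (c i : ℕ)]
    simpa only [hcval, sum_add_distrib, ← card_filter, ← sdiff_eq_filter] using hcost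

theorem exists_antitone_blocks {α : Type*} {V : Finset α} {m t : ℕ} (ht : t * (m + 2) ≤ #V) :
    ∃ b : Fin 3 → Fin t → Finset α, Antitone b ∧
      (∀ (c : Fin 3) i, b c i ∈ V.powersetCard (m + 2 - c)) ∧
      ∀ c, Pairwise (Function.onFun Disjoint (b c)) := by
  obtain ⟨B, hB, hd⟩ :=
    exists_pairwise_disjoint_card_eq V (fun _ : Fin t ↦ m + 2) (by simpa using ht)
  simp only [mem_powersetCard] at hB
  choose B₁ hB₁ hB₁' using fun i ↦ exists_subset_card_eq
    ((Nat.le_succ (m + 1)).trans (hB i).2.ge)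
  choose B₂ hB₂ hB₂' using fun i ↦ exists_subset_card_eq ((Nat.le_succ m).trans (hB₁' i).ge)
  have hanti : Antitone ![B, B₁, B₂] := Fin.antitone_iff_succ_le.2 <| Fin.forall_fin_two.2
    ⟨hB₁, hB₂⟩
  refine ⟨![B, B₁, B₂], hanti, fun c i ↦ mem_powersetCard.2
    ⟨(hanti (Fin.zero_le c) i).trans (hB i).1, ?_⟩, fun c i j hij ↦
      (hd hij).mono (hanti (Fin.zero_le c) i) (hanti (Fin.zero_le c) j)⟩
  fin_cases c
  exacts [(hB i).2, hB₁' i, hB₂' i]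

theorem ShiftedOn.mul_layerDensity_add_lt {α : Type*} [LinearOrder α] {F : Finset (Finset α)}
    {U V : Finset α} (h : ShiftedOn .univ F) (hUV : ∀ u ∈ U, ∀ v ∈ V, u < v)
    (hF : ¬ HasMatching F #U) {m t : ℕ} (ht : t * (m + 2) ≤ #V) {η : ℝ} (hη : 0 < η)
    {p : Fin 3 → ℝ}
    (hp : ∀ c : Fin 3, p c = layerDensity V (m + 2 - c) (coreLink F U V (m + 2 - c) c) * t)
    (hp3 : ∀ c, 3 < η ^ 2 * p c) (hp2 : #U ≤ (1 - η) * p 2) :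
    (1 - η) * (p 0 + p 1) < #U := by
  obtain ⟨b, hanti, hb, hd⟩ := exists_antitone_blocks ht
  have hdisj : Disjoint U V := disjoint_left.2 fun x hx hx' ↦ (hUV x hx x hx').false
  obtain ⟨σ, hσ⟩ := exists_forall_mul_le_of_expect_sub_sq_le (p := p)
    (X := fun (c : Fin 3) (σ : Perm V) ↦ (hitCount (coreLink F U V (m + 2 - c) c) (b c) σ : ℝ)) hη
    (fun c ↦ by
      simpa only [hp, Fintype.card_fin] using expect_hitCount_sub_sq_le (hb c) (hd c)
        coreLink_subset_powersetCard (h.shiftedOn_coreLink hdisj))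
    (by simpa using hp3)
  have hcost := card_add_card_lt_of_not_hasMatching hdisj hF
    (T := fun c : Fin 3 ↦ {i | ofSubtype σ • b c i ∈ coreLink F U V (m + 2 - c) c})
    (E := fun c i ↦ ofSubtype σ • b c i) (m := fun c ↦ m + 2 - c)
    (fun c c' hcc' i hi ↦ ?_) (fun c c' hcc' i ↦ image_subset_image (hanti hcc' i))
    (fun c i hi ↦ (mem_filter.1 hi).2)
    (fun i j hij ↦ (disjoint_image (MulAction.injective _)).2 (hd 0 hij))
    (mod_cast hp2.trans (hσ 2))
  · rw [mul_add]
    exact (add_le_add (hσ 0) (hσ 1)).trans_lt (mod_cast hcost)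
  · refine mem_filter.2 ⟨mem_univ i, h.mem_coreLink_of_subset hUV (mem_filter.1 hi).2
      (image_subset_image (hanti hcc' i)) ?_ (by have : (c : ℕ) ≤ c' := hcc'; omega)⟩
    exact (mem_powersetCard.1 (ofSubtype_smul_mem_powersetCard σ (hb c' i))).2

end CoreFreeSets

section CoreFreeBound

theorem choose_succ_mul_succ (N m : ℕ) :
    (N.choose (m + 1) : ℝ) * (m + 1) = N.choose m * (N - m) := by
  obtain h | h := le_or_gt m N
  · rw [← Nat.cast_sub h]
    exact mod_cast Nat.choose_succ_right_eq N m
  · rw [Nat.choose_eq_zero_of_lt h, Nat.choose_eq_zero_of_lt (h.trans m.lt_succ_self)]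
    simp only [Nat.cast_zero, zero_mul]

theorem mul_layerDensity_succ_le {α : Type*} {V : Finset α} {𝒜 ℬ : Finset (Finset α)} {m : ℕ}
    {a g : ℝ} (ha : 0 < a) (hg : g * a ≤ #V - m) (h : (m + 1) * (#𝒜 : ℝ) ≤ a * #ℬ) :
    g * layerDensity V (m + 1) 𝒜 ≤ layerDensity V m ℬ := by
  obtain hm | hm := lt_or_ge m #V
  · have hpos : (0 : ℝ) < (#V).choose m := Nat.cast_pos.2 (Nat.choose_pos hm.le)
    have hpos' : (0 : ℝ) < (#V).choose (m + 1) := Nat.cast_pos.2 (Nat.choose_pos hm)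
    refine le_of_mul_le_mul_left ?_ ha
    calc a * (g * layerDensity V (m + 1) 𝒜) = g * a * layerDensity V (m + 1) 𝒜 := by ring
      _ ≤ (#V - m) * layerDensity V (m + 1) 𝒜 :=
          mul_le_mul_of_nonneg_right hg layerDensity_nonneg
      _ = (m + 1) * (#𝒜 : ℝ) / (#V).choose m := by
          rw [layerDensity, mul_div_assoc', div_eq_div_iff hpos'.ne' hpos.ne']
          linear_combination -(#𝒜 : ℝ) * choose_succ_mul_succ (#V) m
      _ ≤ a * layerDensity V m ℬ := by
          rw [layerDensity, mul_div_assoc']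
          exact div_le_div_of_nonneg_right h hpos.le
  · rw [layerDensity, Nat.choose_eq_zero_of_lt (Nat.lt_succ_of_le hm), Nat.cast_zero, div_zero,
      mul_zero]
    exact layerDensity_nonneg

theorem lt_layerDensity_mul_of_mul_choose_lt {α : Type*} {V : Finset α}
    {𝒜 : Finset (Finset α)} {m : ℕ} (h𝒜 : 𝒜 ⊆ V.powersetCard (m + 1)) {a t : ℝ}
    (ht : #V - m ≤ t * (m + 1)) (h : a * (#V).choose m < #𝒜) :
    a < layerDensity V (m + 1) 𝒜 * t := by
  classical
  have hchoose : ((#V).choose (m + 1) : ℝ) ≤ t * (#V).choose m := by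
    refine le_of_mul_le_mul_right ?_ (by positivity : (0 : ℝ) < m + 1)
    calc ((#V).choose (m + 1) : ℝ) * (m + 1) = (#V - m) * (#V).choose m := by
          rw [choose_succ_mul_succ, mul_comm]
      _ ≤ t * (m + 1) * (#V).choose m := by gcongr
      _ = t * (#V).choose m * (m + 1) := by ring
  refine lt_of_mul_lt_mul_right ?_ ((#V).choose m).cast_nonneg
  calc a * (#V).choose m < #𝒜 := h
    _ = layerDensity V (m + 1) 𝒜 * (#V).choose (m + 1) := (layerDensity_mul_choose h𝒜).symm
    _ ≤ layerDensity V (m + 1) 𝒜 * (t * (#V).choose m) :=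
        mul_le_mul_of_nonneg_left hchoose layerDensity_nonneg
    _ = _ := (mul_assoc _ _ _).symm

variable {F : Finset (Finset ℕ)} {m n s : ℕ} {γ g x y : ℝ}

theorem ShiftedOn.mul_layerDensity_coreLink_zero_le (h : ShiftedOn .univ F)
    (hF : ¬ HasMatching F (s + 1)) (hs : 0 < s)
    (hg : g * (s * (m + 1)) ≤ #(Ico (s + 1) n) - (m + 1)) :
    g * layerDensity (Ico (s + 1) n) (m + 2) (coreLink F (range (s + 1)) (Ico (s + 1) n) (m + 2) 0)
      ≤ layerDensity (Ico (s + 1) n) (m + 1)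
        (coreLink F (range (s + 1)) (Ico (s + 1) n) (m + 1) 1) := by
  refine mul_layerDensity_succ_le (by positivity : 0 < s * (m + 1 : ℝ)) (mod_cast hg) ?_
  have hcard := h.card_coreLink_zero_le (n := n) (m := m + 1) hF
  rw [div_mul_eq_mul_div, div_mul_eq_mul_div, le_div_iff₀ (by positivity)] at hcard
  rw [mul_comm, mul_comm (s : ℝ)]
  exact mod_cast hcard

theorem ShiftedOn.mul_layerDensity_coreLink_one_le (h : ShiftedOn .univ F)
    (hF : ¬ HasMatching F (s + 1)) (hs : 0 < s)
    (hg : g * (s * (m + 1)) ≤ #(Ico (s + 1) n) - m) :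
    g * layerDensity (Ico (s + 1) n) (m + 1) (coreLink F (range (s + 1)) (Ico (s + 1) n) (m + 1) 1)
      ≤ layerDensity (Ico (s + 1) n) m (coreLink F (range (s + 1)) (Ico (s + 1) n) m 2) := by
  refine mul_layerDensity_succ_le (by positivity : 0 < s * (m + 1 : ℝ)) hg ?_
  rw [mul_comm (s : ℝ), mul_assoc]
  exact mul_le_mul_of_nonneg_left (h.card_coreLink_one_le hF) (by positivity)

theorem le_and_add_one_le_of_mul_le {s : ℝ} {p : Fin 3 → ℝ} (hg : 1 ≤ g) (hx1 : x ≤ 1)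
    (hxs : 1 ≤ x * s) (hy : 0 ≤ y) (hy2 : 1 + x ≤ (1 - x) * (g ^ 2 * y))
    (hy01 : 1 + x ≤ (1 - x) * ((1 + g) * y)) (hs : 0 ≤ s) (hp0 : s * y ≤ p 0)
    (hp1 : g * p 0 ≤ p 1) (hp2 : g * p 1 ≤ p 2) :
    (∀ c, s * y ≤ p c) ∧ s + 1 ≤ (1 - x) * p 2 ∧ s + 1 ≤ (1 - x) * (p 0 + p 1) := by
  have hp1' : g * (s * y) ≤ p 1 := (by gcongr : g * (s * y) ≤ g * p 0).trans hp1
  have hp2' : g ^ 2 * (s * y) ≤ p 2 := by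
    rw [sq, mul_assoc]
    exact (by gcongr : g * (g * (s * y)) ≤ g * p 1).trans hp2
  have hslack {a q : ℝ} (ha : 1 + x ≤ (1 - x) * (a * y)) (hq : a * (s * y) ≤ q) :
      s + 1 ≤ (1 - x) * q :=
    calc s + 1 ≤ s * (1 + x) := by linarith
      _ ≤ s * ((1 - x) * (a * y)) := by gcongr
      _ = (1 - x) * (a * (s * y)) := by ring
      _ ≤ (1 - x) * q := mul_le_mul_of_nonneg_left hq (by linarith)
  refine ⟨Fin.forall_fin_succ.2 ⟨hp0, Fin.forall_fin_two.2 ⟨?_, ?_⟩⟩, hslack hy2 hp2',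
    hslack hy01 (by linarith)⟩
  · exact (le_mul_of_one_le_left (by positivity) hg).trans hp1'
  · exact (le_mul_of_one_le_left (by positivity) (one_le_pow₀ hg)).trans hp2'

-- The slack `x` absorbs rounding and the error in the concentration inequality.
theorem ShiftedOn.card_coreLink_zero_le_of_slack (h : ShiftedOn .univ F)
    (hF : ¬ HasMatching F (s + 1)) (hn : γ * s * (m + 1) ≤ #(Ico (s + 1) n) + 1) (hx : 0 < x)
    (hx1 : x < 1) (hxγ : 2 * x < γ - 1) (hxs : 1 ≤ x * s) (hy : 0 < y) (hsy : 3 < x ^ 2 * (s * y))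
    (hy2 : 1 + x ≤ (1 - x) * ((γ - 2 * x) ^ 2 * y))
    (hy01 : 1 + x ≤ (1 - x) * ((1 + (γ - 2 * x)) * y)) :
    (#(coreLink F (range (s + 1)) (Ico (s + 1) n) (m + 2) 0) : ℝ) ≤
      s * y * (#(Ico (s + 1) n)).choose (m + 1) := by
  by_contra! hcon
  have hs : (0 : ℝ) < s := pos_of_mul_pos_right (by linarith) hx.le
  set g := γ - 2 * x
  set t := #(Ico (s + 1) n) / (m + 2)
  have hg : 1 < g := by linarith
  have hgN : g * (s * (m + 1)) ≤ #(Ico (s + 1) n) - (m + 1) := by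
    have : (m : ℝ) + 1 ≤ x * s * (m + 1) := le_mul_of_one_le_left (by positivity) hxs
    have : (0 : ℝ) ≤ m := Nat.cast_nonneg m
    linarith
  have ht : (#(Ico (s + 1) n) : ℝ) - (m + 1) ≤ t * (m + 2) := by
    have : #(Ico (s + 1) n) + 1 ≤ t * (m + 2) + (m + 2) := Nat.lt_div_mul_add (by omega)
    have : (#(Ico (s + 1) n) : ℝ) + 1 ≤ t * (m + 2) + (m + 2) := mod_cast this
    linarith
  let p (c : Fin 3) : ℝ := layerDensity (Ico (s + 1) n) (m + 2 - c)
    (coreLink F (range (s + 1)) (Ico (s + 1) n) (m + 2 - c) c) * t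
  have hp0 : s * y ≤ p 0 := (lt_layerDensity_mul_of_mul_choose_lt coreLink_subset_powersetCard
    (by push_cast; linarith) hcon).le
  have hp1 : g * p 0 ≤ p 1 := (mul_assoc _ _ _).symm.trans_le <| mul_le_mul_of_nonneg_right
    (h.mul_layerDensity_coreLink_zero_le hF (Nat.cast_pos.1 hs) hgN) t.cast_nonneg
  have hp2 : g * p 1 ≤ p 2 := (mul_assoc _ _ _).symm.trans_le <| mul_le_mul_of_nonneg_right
    (h.mul_layerDensity_coreLink_one_le hF (Nat.cast_pos.1 hs) (by linarith)) t.cast_nonneg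
  obtain ⟨hlarge, hp2', hp01⟩ := le_and_add_one_le_of_mul_le hg.le hx1.le hxs hy.le hy2 hy01
    hs.le hp0 hp1 hp2
  have hlt := h.mul_layerDensity_add_lt (U := range (s + 1)) (V := Ico (s + 1) n)
    lt_of_mem_range_of_mem_Ico (by rwa [card_range]) (Nat.div_mul_le_self _ _) hx
    (p := p) (fun _ ↦ rfl) (fun c ↦ hsy.trans_le (by gcongr; exact hlarge c))
    (by simpa using hp2')
  rw [card_range, Nat.cast_add_one] at hlt
  exact hlt.not_ge hp01

theorem exists_forall_card_coreLink_zero_le (hγ : 1 < γ) (hy : 0 < y)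
    (hy2 : 1 < γ ^ 2 * y) (hy01 : 1 < (1 + γ) * y) :
    ∃ s₀ : ℕ, ∀ (F : Finset (Finset ℕ)) (s m n : ℕ), s₀ ≤ s → ShiftedOn .univ F →
      ¬ HasMatching F (s + 1) → γ * s * (m + 1) ≤ #(Ico (s + 1) n) + 1 →
      (#(coreLink F (range (s + 1)) (Ico (s + 1) n) (m + 2) 0) : ℝ) ≤
        s * y * (#(Ico (s + 1) n)).choose (m + 1) := by
  have hev {f g : ℝ → ℝ} (hf : Continuous f) (hg : Continuous g) (h : f 0 < g 0) :
      ∀ᶠ x in nhdsWithin 0 (.Ioi 0), f x < g x :=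
    (hf.continuousAt.eventually_lt hg.continuousAt h).filter_mono nhdsWithin_le_nhds
  obtain ⟨x, hx, hx1, hxγ, hxy2, hxy01⟩ : ∃ x : ℝ, 0 < x ∧ x < 1 ∧ 2 * x < γ - 1 ∧
      1 + x < (1 - x) * ((γ - 2 * x) ^ 2 * y) ∧ 1 + x < (1 - x) * ((1 + (γ - 2 * x)) * y) :=
    (eventually_mem_nhdsWithin.and <| (hev (by fun_prop) (by fun_prop) (by norm_num)).and <|
      (hev (by fun_prop) (by fun_prop) (by linarith)).and <|
      (hev (by fun_prop) (by fun_prop) (by linarith)).and <|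
      hev (by fun_prop) (by fun_prop) (by linarith)).exists
  refine ⟨⌈max (1 / x) (4 / (x ^ 2 * y))⌉₊, fun F s m n hs h hF hn ↦ ?_⟩
  obtain ⟨hxs, hsy⟩ := max_le_iff.1 (Nat.ceil_le.1 hs)
  rw [div_le_iff₀' (by positivity)] at hxs hsy
  exact h.card_coreLink_zero_le_of_slack hF hn hx hx1 hxγ hxs hy (by linarith) hxy2.le hxy01.le

end CoreFreeBound

section Numerics

variable {γ x y : ℝ}

theorem div_add_one_le_div_add_one (hx : 0 ≤ x) (hxy : x ≤ y) : x / (x + 1) ≤ y / (y + 1) := by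
  rw [div_le_div_iff₀ (by linarith) (by linarith)]
  linarith

theorem div_add_one_mul_le_of_le (hγ1 : 1 < γ) (hγ2 : γ ≤ 13 / 10) (hx : 0 ≤ x) {ε : ℝ}
    (hε : ε = (γ - 1) * (4 - 3 * γ) / (4 * γ)) :
    x / (x + 1) * (1 / γ + ε) ≤ 1 - 1 / γ - ε + (5 - 3 * γ) / 2 * (γ * x / (γ * x + 1)) := by
  set r := x / (x + 1)
  have hε0 : 0 ≤ ε := hε ▸ div_nonneg (mul_nonneg (by linarith) (by linarith)) (by linarith)
  have hr1 : r ≤ 1 := div_le_one_of_le₀ (by linarith) (by linarith)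
  have hrγ : (5 - 3 * γ) / 2 * r ≤ (5 - 3 * γ) / 2 * (γ * x / (γ * x + 1)) :=
    mul_le_mul_of_nonneg_left
      (div_add_one_le_div_add_one hx (le_mul_of_one_le_left hx hγ1.le)) (by linarith)
  have hrε : r * ε ≤ ε := mul_le_of_le_one_left hε0 hr1
  have hslope : 1 / γ - (5 - 3 * γ) / 2 = 1 - 1 / γ - 2 * ε := by
    rw [hε]
    field_simp
    ring
  have hslope0 : 0 ≤ 1 - 1 / γ - 2 * ε := by
    have : 1 - 1 / γ - 2 * ε = (γ - 1) * (3 * γ - 2) / (2 * γ) := by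
      rw [hε]
      field_simp
      ring
    rw [this]
    exact div_nonneg (mul_nonneg (by linarith) (by linarith)) (by linarith)
  have := mul_le_of_le_one_left hslope0 hr1
  rw [← hslope] at this hslope0
  linarith

theorem half_mul_le (hγ1 : 13 / 10 ≤ γ) (hγ2 : γ ≤ 5 / 3) :
    1 / 2 * (1 / γ + 1 / 200) ≤ 1 - 1 / γ - 1 / 200 + (5 - 3 * γ) / 2 * (γ / (γ + 1)) := by
  have hw : 0 ≤ (γ - 13 / 10) * (5 / 3 - γ) := mul_nonneg (by linarith) (by linarith)
  have hdiff : 1 - 1 / γ - 1 / 200 + (5 - 3 * γ) / 2 * (γ / (γ + 1)) - 1 / 2 * (1 / γ + 1 / 200) =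
      (397 / 400 * (2 * γ * (γ + 1)) + (5 - 3 * γ) * γ ^ 2 - 3 * (γ + 1)) /
        (2 * γ * (γ + 1)) := by
    field_simp
    ring
  rw [← sub_nonneg, hdiff]
  refine div_nonneg ?_ (by positivity)
  nlinarith [mul_nonneg (by linarith : 0 ≤ γ) hw]

theorem one_div_one_add_le (hγ1 : 13 / 10 ≤ γ) (hγ2 : γ ≤ 5 / 3) :
    1 / (1 + γ) ≤ 99 / 100 - 1 / γ + (5 - 3 * γ) / 2 * (γ * 2 / (γ * 2 + 1)) := by
  have hw : 0 ≤ (γ - 13 / 10) * (5 / 3 - γ) := mul_nonneg (by linarith) (by linarith)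
  have hdiff : 99 / 100 - 1 / γ + (5 - 3 * γ) / 2 * (γ * 2 / (γ * 2 + 1)) - 1 / (1 + γ) =
      (99 / 100 * (γ * (2 * γ + 1) * (1 + γ)) - (2 * γ + 1) * (1 + γ)
        + (5 - 3 * γ) * γ ^ 2 * (1 + γ) - γ * (2 * γ + 1)) / (γ * (2 * γ + 1) * (1 + γ)) := by
    field_simp
  rw [← sub_nonneg, hdiff]
  refine div_nonneg ?_ (by positivity)
  nlinarith [mul_nonneg (by linarith : 0 ≤ γ) hw, mul_nonneg (sq_nonneg γ) hw]

theorem one_div_sq_le (hγ1 : 13 / 10 ≤ γ) (hγ2 : γ ≤ 5 / 3) :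
    1 / γ ^ 2 ≤ 99 / 100 - 1 / γ + (5 - 3 * γ) / 2 * (γ * 2 / (γ * 2 + 1)) := by
  have hw : 0 ≤ (γ - 13 / 10) * (5 / 3 - γ) := mul_nonneg (by linarith) (by linarith)
  have hdiff : 99 / 100 - 1 / γ + (5 - 3 * γ) / 2 * (γ * 2 / (γ * 2 + 1)) - 1 / γ ^ 2 =
      (-3 * γ ^ 4 + 349 / 50 * γ ^ 3 - 101 / 100 * γ ^ 2 - 3 * γ - 1) /
        (γ ^ 2 * (2 * γ + 1)) := by
    field_simp
    ring
  rw [← sub_nonneg, hdiff]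
  refine div_nonneg ?_ (by positivity)
  nlinarith [mul_nonneg (by linarith : 0 ≤ γ) hw, mul_nonneg (sq_nonneg γ) hw]

theorem max_one_div_add_le (hγ1 : 13 / 10 ≤ γ) (hγ2 : γ ≤ 5 / 3) (hx : 2 ≤ x) :
    max (1 / (1 + γ)) (1 / γ ^ 2) + 1 / 200 ≤
      1 - 1 / γ - 1 / 200 + (5 - 3 * γ) / 2 * (γ * x / (γ * x + 1)) := by
  have hmono : (5 - 3 * γ) / 2 * (γ * 2 / (γ * 2 + 1)) ≤
      (5 - 3 * γ) / 2 * (γ * x / (γ * x + 1)) :=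
    mul_le_mul_of_nonneg_left
      (div_add_one_le_div_add_one (by linarith) (by gcongr)) (by linarith)
  have := max_le (one_div_one_add_le hγ1 hγ2) (one_div_sq_le hγ1 hγ2)
  linarith

-- The entries of the minimum are two bounds on the size of the core-free part of a shifted family,
-- as a multiple of `s`. The first one suffices if `γ < 4 / 3` or `m = 0`, the second one otherwise.
theorem exists_slack_and_coreFree_ratio (hγ1 : 1 < γ) (hγ2 : γ ≤ 5 / 3) :
    ∃ ε y : ℝ, 0 < ε ∧ ε * γ ≤ γ - 1 ∧ 0 < y ∧ 1 < γ ^ 2 * y ∧ 1 < (1 + γ) * y ∧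
      ∀ m : ℕ, min ((m + 1) / (m + 1 + 1) * (1 / γ + ε)) y ≤
        1 - 1 / γ - ε + (5 - 3 * γ) / 2 * (γ * (m + 1) / (γ * (m + 1) + 1)) := by
  rcases le_total γ (13 / 10) with hγ | hγ
  · refine ⟨(γ - 1) * (4 - 3 * γ) / (4 * γ), 2,
      div_pos (mul_pos (by linarith) (by linarith)) (by linarith), ?_, two_pos, by nlinarith,
      by linarith, fun m ↦ min_le_of_left_le <|
        div_add_one_mul_le_of_le hγ1 hγ (by positivity) rfl⟩
    field_simp
    nlinarith
  refine ⟨1 / 200, max (1 / (1 + γ)) (1 / γ ^ 2) + 1 / 200, by norm_num, by linarith,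
    by positivity, ?_, ?_, fun m ↦ ?_⟩
  · rw [← div_lt_iff₀' (by positivity)]
    exact lt_add_of_le_of_pos (le_max_right _ _) (by norm_num)
  · rw [← div_lt_iff₀' (by positivity)]
    exact lt_add_of_le_of_pos (le_max_left _ _) (by norm_num)
  · rcases m.eq_zero_or_pos with rfl | hm
    · exact min_le_of_left_le (by simpa [one_add_one_eq_two] using half_mul_le hγ hγ2)
    · refine min_le_of_right_le (max_one_div_add_le hγ hγ2 ?_)
      have : (1 : ℝ) ≤ m := mod_cast hm
      linarith

end Numerics

section UniversalBound

variable {F : Finset (Finset ℕ)} {γ ε y : ℝ} {m n s : ℕ}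

theorem exists_sub_two_le_and_mul_le {N : ℕ} (hN : γ * s * (m + 1) ≤ N + 1)
    (hγs : 1 ≤ γ * s) :
    ∃ t : ℕ, γ * s - 2 ≤ t ∧ (t : ℝ) ≤ γ * s - 1 ∧ t * (m + 1) ≤ N := by
  have hfloor : (⌊γ * s⌋₊ : ℝ) ≤ γ * s := Nat.floor_le (by linarith)
  have hfloor' : γ * s < ⌊γ * s⌋₊ + 1 := Nat.lt_floor_add_one _
  have hcast : ((⌊γ * s⌋₊ - 1 : ℕ) : ℝ) = ⌊γ * s⌋₊ - 1 := by
    rw [Nat.cast_sub (Nat.floor_pos.2 hγs), Nat.cast_one]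
  refine ⟨⌊γ * s⌋₊ - 1, by linarith, by linarith, ?_⟩
  have : ((⌊γ * s⌋₊ - 1 : ℕ) : ℝ) * (m + 1) ≤ N :=
    calc ((⌊γ * s⌋₊ - 1 : ℕ) : ℝ) * (m + 1) ≤ (γ * s - 1) * (m + 1) := by gcongr; linarith
      _ = γ * s * (m + 1) - (m + 1) := by ring
      _ ≤ N := by linarith [(Nat.cast_nonneg m : (0 : ℝ) ≤ m)]
  exact mod_cast this

theorem ShiftedOn.layerDensity_coreLink_one_le (h : ShiftedOn .univ F)
    (hF : ¬ HasMatching F (s + 1)) {V : Finset ℕ} (hV : Disjoint (range (s + 1)) V) {t : ℕ}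
    (htm : t * m ≤ #V) (hγ : 0 < γ) (hγs : 2 < γ * s) (ht : γ * s - 2 ≤ t)
    (hεs : 2 * (1 / γ + ε) ≤ ε * γ * s) :
    layerDensity V m (coreLink F (range (s + 1)) V m 1) ≤ 1 / γ + ε := by
  refine le_of_mul_le_mul_right (a := γ * s - 2) ?_ (by linarith)
  calc layerDensity V m (coreLink F (range (s + 1)) V m 1) * (γ * s - 2) ≤
        layerDensity V m (coreLink F (range (s + 1)) V m 1) * t :=
        mul_le_mul_of_nonneg_left ht layerDensity_nonneg
    _ ≤ s := h.layerDensity_coreLink_one_mul_le hF hV htm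
    _ ≤ s + (ε * γ * s - 2 * (1 / γ + ε)) := by linarith
    _ = (1 / γ + ε) * (γ * s - 2) := by field_simp; ring

theorem ShiftedOn.card_coreLink_zero_le_mul_layerDensity (h : ShiftedOn .univ F)
    (hF : ¬ HasMatching F (s + 1)) :
    (#(coreLink F (range (s + 1)) (Ico (s + 1) n) (m + 2) 0) : ℝ) ≤
      s * ((m + 1) / (m + 1 + 1) *
        layerDensity (Ico (s + 1) n) (m + 1)
          (coreLink F (range (s + 1)) (Ico (s + 1) n) (m + 1) 1)) *
        (#(Ico (s + 1) n)).choose (m + 1) := by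
  refine (h.card_coreLink_zero_le hF).trans_eq ?_
  rw [← layerDensity_mul_choose coreLink_subset_powersetCard]
  push_cast
  ring

theorem ShiftedOn.card_coreLink_zero_add_sum_card_link_le (h : ShiftedOn .univ F)
    (hF : ¬ HasMatching F (s + 1)) (hn : γ * s * (m + 1) ≤ #(Ico (s + 1) n) + 1)
    (hγ : 0 < γ) (hε : 0 < ε) (hεγ : ε * γ ≤ γ - 1) (hεs : 12 ≤ ε * γ * s)
    (hεs' : 2 * ((16 + 8 * (ε * γ)) / (ε * γ) ^ 2) ≤ ε * γ * s)
    (hεs'' : 2 * (1 / γ + ε) ≤ ε * γ * s) (hγs : 3 ≤ (γ - 1) * s)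
    (hy : (#(coreLink F (range (s + 1)) (Ico (s + 1) n) (m + 2) 0) : ℝ) ≤
      s * y * (#(Ico (s + 1) n)).choose (m + 1)) {D : ℝ} (hD0 : 0 ≤ D)
    (hD : min ((m + 1) / (m + 1 + 1) * (1 / γ + ε)) y ≤ 1 - 1 / γ - ε + D) :
    (#(coreLink F (range (s + 1)) (Ico (s + 1) n) (m + 2) 0) : ℝ) +
        ∑ i ∈ range (s + 1), (#(link F (Ico (s + 1) n) (m + 1) {i}) : ℝ) ≤
      s * (1 + D) * (#(Ico (s + 1) n)).choose (m + 1) := by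
  set V := Ico (s + 1) n
  have hs : (0 : ℝ) ≤ s := Nat.cast_nonneg s
  obtain ⟨t, ht, ht', htm⟩ := exists_sub_two_le_and_mul_le hn (by linarith)
  have ht0 : 0 < t := (Nat.cast_pos (α := ℝ)).1 (by linarith)
  have hchoose : (0 : ℝ) < (#V).choose (m + 1) :=
    mod_cast Nat.choose_pos ((Nat.le_mul_of_pos_left _ ht0).trans htm)
  set α := layerDensity V (m + 1) (coreLink F (range (s + 1)) V (m + 1) 1)
  have hα0 : 0 ≤ α := layerDensity_nonneg
  have hαγ : α ≤ 1 / γ + ε := h.layerDensity_coreLink_one_le hF disjoint_range_Ico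
    (mod_cast htm) hγ (by linarith) ht hεs''
  set Φ := (#(coreLink F (range (s + 1)) V (m + 2) 0) : ℝ) / (#V).choose (m + 1) with hΦ
  have hΦα : Φ ≤ s * ((m + 1) / (m + 1 + 1) * α) :=
    (div_le_iff₀ hchoose).2 (h.card_coreLink_zero_le_mul_layerDensity hF)
  have hΦα' : Φ ≤ s * α := hΦα.trans <| mul_le_mul_of_nonneg_left
    (mul_le_of_le_one_left hα0 (div_le_one_of_le₀ (by linarith) (by positivity))) hs
  have hΦD : Φ - s * D ≤ s * (1 - 1 / γ - ε) := by
    have : Φ ≤ s * min ((m + 1) / (m + 1 + 1) * (1 / γ + ε)) y := by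
      rw [mul_min_of_nonneg _ _ hs]
      exact le_min (hΦα.trans (by gcongr)) ((div_le_iff₀ hchoose).2 hy)
    linarith [mul_le_mul_of_nonneg_left hD hs]
  have hlinks := h.sum_layerDensity_link_add_le hF disjoint_range_Ico htm (mul_pos hε hγ) hεs
    hεs' hγs ht (w := max (Φ - s * D) 0) (le_max_right _ _)
    (max_le (by linarith [mul_nonneg hs hD0]) (by positivity)) ?_
  · have hsum : ∑ i ∈ range (s + 1), layerDensity V (m + 1) (link F V (m + 1) {i}) + Φ ≤
        s * (1 + D) := by linarith [le_max_left (Φ - s * D) 0]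
    refine (le_of_eq ?_).trans (mul_le_mul_of_nonneg_right hsum hchoose.le)
    rw [add_mul, sum_mul, hΦ, div_mul_cancel₀ _ hchoose.ne', add_comm]
    simp only [layerDensity_mul_choose link_subset_powersetCard]
  · have hslack : 0 ≤ s * (1 - 1 / γ - ε) := by
      refine mul_nonneg hs (le_of_mul_le_mul_right ?_ hγ)
      rw [sub_mul, sub_mul, one_div_mul_cancel hγ.ne']
      linarith
    calc max (Φ - s * D) 0 * t ≤ s * (1 - 1 / γ - ε) * (γ * s) :=
          mul_le_mul (max_le hΦD hslack) (by linarith) t.cast_nonneg hslack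
      _ = (γ - 1 - ε * γ) * s ^ 2 := by field_simp

theorem half_mul_div_mul_choose_le (hγ1 : 1 < γ) (hγ2 : γ ≤ 5 / 3) {N : ℕ}
    (hN : γ * s * (m + 1) ≤ N + 1) :
    s * ((5 - 3 * γ) / 2 * (γ * (m + 1) / (γ * (m + 1) + 1))) * N.choose (m + 1) ≤
      (1 - (γ - 1) / 2 * ((5 * (m + 2) - 2) / (γ * (m + 2) - (γ - 1)))) *
        (N + 1).choose (m + 2) := by
  have hden : 0 < γ * (m + 1) + 1 := by positivity
  have hcoeff : 1 - (γ - 1) / 2 * ((5 * ((m : ℝ) + 2) - 2) / (γ * (m + 2) - (γ - 1))) =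
      (m + 2) * ((5 - 3 * γ) / 2 / (γ * (m + 1) + 1)) := by
    rw [show γ * ((m : ℝ) + 2) - (γ - 1) = γ * (m + 1) + 1 by ring]
    field_simp
    ring
  have habsorb : ((N : ℝ) + 1) * N.choose (m + 1) = (N + 1).choose (m + 2) * (m + 2) :=
    mod_cast Nat.add_one_mul_choose_eq N (m + 1)
  calc s * ((5 - 3 * γ) / 2 * (γ * (m + 1) / (γ * (m + 1) + 1))) * N.choose (m + 1)
      = (5 - 3 * γ) / 2 / (γ * (m + 1) + 1) * (γ * s * (m + 1)) * N.choose (m + 1) := by ring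
    _ ≤ (5 - 3 * γ) / 2 / (γ * (m + 1) + 1) * (N + 1) * N.choose (m + 1) := by
        gcongr
        exact div_nonneg (by linarith) hden.le
    _ = _ := by rw [hcoeff, mul_assoc, habsorb]; ring

theorem exists_forall_card_le_of_shiftedOn (hγ1 : 1 < γ) (hγ2 : γ ≤ 5 / 3) :
    ∃ s₀ : ℕ, ∀ (F : Finset (Finset ℕ)) (s m n : ℕ), s₀ ≤ s → s + 1 ≤ n →
      F ⊆ (range n).powersetCard (m + 2) → ShiftedOn .univ F → ¬ HasMatching F (s + 1) →
      γ * s * (m + 1) ≤ (n - s : ℕ) →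
      (#F : ℝ) ≤ n.choose (m + 2) -
        (γ - 1) / 2 * ((5 * (m + 2) - 2) / (γ * (m + 2) - (γ - 1))) *
          (n - s).choose (m + 2) := by
  obtain ⟨ε, y, hε, hεγ, hy, hy2, hy01, hnum⟩ := exists_slack_and_coreFree_ratio hγ1 hγ2
  obtain ⟨s₁, hs₁⟩ := exists_forall_card_coreLink_zero_le hγ1 hy hy2 hy01
  have hlarge {a : ℝ} (ha : 0 < a) (b : ℝ) : ∀ᶠ s : ℕ in .atTop, b ≤ a * s :=
    (tendsto_natCast_atTop_atTop.const_mul_atTop ha).eventually_ge_atTop b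
  have he : 0 < ε * γ := by positivity
  obtain ⟨s₂, hs₂⟩ := Filter.eventually_atTop.1 <| (hlarge he 12).and <|
    (hlarge he (2 * ((16 + 8 * (ε * γ)) / (ε * γ) ^ 2))).and <|
    (hlarge he (2 * (1 / γ + ε))).and (hlarge (sub_pos.2 hγ1) 3)
  refine ⟨max s₁ s₂, fun F s m n hs hsn hFn h hF hn ↦ ?_⟩
  obtain ⟨hεs, hεs', hεs'', hγs⟩ := hs₂ s (le_of_max_le_right hs)
  obtain ⟨N, rfl⟩ := Nat.exists_eq_add_of_le hsn
  have hV : #(Ico (s + 1) (s + 1 + N)) = N := by simp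
  have hU : range (s + 1) ∪ Ico (s + 1) (s + 1 + N) = range (s + 1 + N) := by
    rw [range_eq_Ico, range_eq_Ico, Ico_union_Ico_eq_Ico (by omega) hsn]
  rw [show s + 1 + N - s = N + 1 by omega] at hn ⊢
  push_cast at hn
  have hcount := card_add_choose_le (F := F) disjoint_range_Ico (by rwa [hU])
  have hbound := h.card_coreLink_zero_add_sum_card_link_le hF (by rwa [hV]) (by positivity) hε
    hεγ hεs hεs' hεs'' hγs (hs₁ F s m _ (le_of_max_le_left hs) h hF (by rwa [hV]))
    (mul_nonneg (by linarith) (by positivity)) (hnum m)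
  have htail := half_mul_div_mul_choose_le hγ1 hγ2 hn
  rw [coreLink_zero, hV] at hbound
  rw [card_range, hV] at hcount
  have hcount : (#F : ℝ) + (N.choose (m + 2) + (s + 1) * N.choose (m + 1)) ≤
      (s + 1 + N).choose (m + 2) + (#(link F (Ico (s + 1) (s + 1 + N)) (m + 2) ∅) +
        ∑ i ∈ range (s + 1), (#(link F (Ico (s + 1) (s + 1 + N)) (m + 1) {i}) : ℝ)) :=
    mod_cast hcount
  have hpascal : ((N + 1).choose (m + 2) : ℝ) = N.choose (m + 1) + N.choose (m + 2) :=
    mod_cast Nat.choose_succ_succ N (m + 1)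
  linarith

end UniversalBound

end ErdosMatching

open ErdosMatching

theorem erdos_matching_universal_bound (γ : ℝ) (hγ1 : 1 < γ) (hγ2 : γ ≤ 5 / 3) :
    ∃ s₀ : ℕ, ∀ s k n : ℕ, s₀ ≤ s → 2 ≤ k →
      γ * s * k - (γ - 1) * s ≤ (n : ℝ) →
      (maxSizeEMC n k s : ℝ) ≤
        (n.choose k : ℝ) -
          (γ - 1) / 2 * ((5 * k - 2) / (γ * k - (γ - 1))) * ((n - s).choose k : ℝ) := by
  obtain ⟨s₀, hs₀⟩ := exists_forall_card_le_of_shiftedOn hγ1 hγ2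
  refine ⟨max s₀ 1, fun s k n hs hk hn ↦ ?_⟩
  obtain ⟨m, rfl⟩ := Nat.exists_eq_add_of_le' hk
  have hs1 : (1 : ℝ) ≤ s := mod_cast le_of_max_le_right hs
  push_cast at hn
  have hn' : γ * s * (m + 1) ≤ n - s := by linarith
  have hsn : s + 1 ≤ n := by
    have : (1 : ℝ) ≤ γ * s * (m + 1) := one_le_mul_of_one_le_of_one_le
      (one_le_mul_of_one_le_of_one_le hγ1.le hs1) (by linarith [m.cast_nonneg (α := ℝ)])
    have : (s : ℝ) + 1 ≤ n := by linarith
    exact mod_cast this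
  obtain ⟨𝒜, h𝒜, hν, hcard⟩ := exists_card_eq_maxSizeEMC n (m + 2) s
  have hempty : ∅ ∉ 𝒜 := fun h ↦ by simpa using (mem_powersetCard.1 (h𝒜 h)).2
  obtain ⟨ℬ, hℬ, hmatch, hcardℬ, hshift⟩ :=
    exists_shiftedOn h𝒜 (not_hasMatching_of_matchingNumber_le hempty hν)
  rw [← hcard, ← hcardℬ]
  push_cast
  exact hs₀ ℬ s m n (le_of_max_le_left hs) hsn hℬ hshift hmatch
    (by rwa [Nat.cast_sub (by omega)])
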